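/- arXiv:2107.10000 — 2 statements merged into one kernel-verified Lean document; each statement's English description precedes it below -/
import Mathlib

section
/- The global Hoffman constant Hof F := sup_{b ∈ dom F, x ∈ ℝⁿ} d(x,F(b))/d(b,F⁻¹(x)) satisfies Hof F = sup { d_*(0ₙ, conv{a_t : t ∈ J})⁻¹ : J ⊆ T compact and 0ₙ ∉ conv{a_t : t ∈ J} }, where conv denotes the convex hull. -/
/-!
The distance from `b` to `F⁻¹(x)` is the largest violation `max_t (aₜ'x - bₜ)⁺`, so both
inequalities compare how far `x` is from being feasible with how much it violates the constraints.

Upper bound: let `c` be smaller than every dual distance on the right-hand side, and minimise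
violation plus `c ‖· - x‖`. If the minimiser `y` were infeasible, a feasible point would be a
common strict descent direction for the constraints active at `y`, so their convex hull would
avoid `0`, hence the dual ball of some radius greater than `c`. Separating the two gives a unit
direction along which the violation drops faster than at rate `c`, contradicting minimality. So
`y` is feasible, and comparing with the value at `x` bounds `c ‖y - x‖` by the violation of `x`.

Lower bound: a given `u ∈ conv {aₜ : t ∈ J}` involves finitely many `aₜ`, and some `z` satisfies
`aₜ'z ≤ -1` for these. With `bₜ = max (aₜ'z) (-1)` and `x = 0` the violation is at most `1`, while
`u's ≤ -1` for every feasible `s`, so that the distance from `0` to `F(b)` is at least `1 / ‖u‖_*`.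
-/

open Filter Set EMetric
open scoped Topology ENNReal NNReal

/-- The feasible set `F(b) = {x ∈ ℝⁿ : aₜ'x ≤ bₜ for all t ∈ T}`. -/
def feas {n : ℕ} {T : Type*} [TopologicalSpace T]
    (a : T → (Fin n → ℝ)) (b : C(T, ℝ)) : Set (Fin n → ℝ) :=
  {x | ∀ t : T, (∑ i, a t i * x i) ≤ b t}

/-- Distance (in `[0,+∞]`, with `d(z,∅) = +∞`) from `z` to `S ⊆ ℝⁿ` with respect to the
norm `p` on `ℝⁿ`. -/
noncomputable def pDist {n : ℕ} (p : Seminorm ℝ (Fin n → ℝ))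
    (z : Fin n → ℝ) (S : Set (Fin n → ℝ)) : ℝ≥0∞ :=
  ⨅ s ∈ S, ENNReal.ofReal (p (z - s))

/-- The dual norm `‖u‖_* = sup_{p(x) ≤ 1} |u'x|` of `u ∈ ℝⁿ`, valued in `[0,+∞]`. -/
noncomputable def dualNorm {n : ℕ} (p : Seminorm ℝ (Fin n → ℝ)) (u : Fin n → ℝ) : ℝ≥0∞ :=
  ⨆ (x : Fin n → ℝ) (_ : p x ≤ 1), ENNReal.ofReal |∑ i, u i * x i|

/-- The dual distance `d_*(0ₙ, S) = inf_{u ∈ S} ‖u‖_*`, valued in `[0,+∞]` (`= +∞` if `S = ∅`). -/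
noncomputable def dualDist0 {n : ℕ} (p : Seminorm ℝ (Fin n → ℝ)) (S : Set (Fin n → ℝ)) : ℝ≥0∞ :=
  ⨅ u ∈ S, dualNorm p u

section

open Metric

section DualPairing

variable {E : Type*} [NormedAddCommGroup E] [NormedSpace ℝ E] [FiniteDimensional ℝ E]

theorem exists_forall_bidual_apply_eq (f : StrongDual ℝ (StrongDual ℝ E)) :
    ∃ x : E, ∀ u, f u = u x := by
  obtain ⟨x, hx⟩ := (Module.evalEquiv ℝ E).surjective
    ((f : StrongDual ℝ E →ₗ[ℝ] ℝ) ∘ₗ (LinearMap.toContinuousLinearMap (F' := ℝ)).toLinearMap)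
  exact ⟨x, fun u => (LinearMap.congr_fun hx (u : E →ₗ[ℝ] ℝ)).symm⟩

theorem exists_norm_le_one_forall_apply_le_neg {K : Set (StrongDual ℝ E)} (hK : Convex ℝ K)
    {c : ℝ} (hc : 0 < c) (hKc : ∀ u ∈ K, c ≤ ‖u‖) :
    ∃ d : E, ‖d‖ ≤ 1 ∧ ∀ u ∈ K, u d ≤ -c := by
  have hdisj : Disjoint (ball 0 c) K := disjoint_left.2 fun u hu huK =>
    (mem_ball_zero_iff.1 hu).not_ge (hKc u huK)
  obtain ⟨f, s, hball, hs⟩ := geometric_hahn_banach_open (convex_ball 0 c) isOpen_ball hK hdisj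
  obtain ⟨x, hx⟩ := exists_forall_bidual_apply_eq f
  have hs0 : 0 < s := by simpa using hball 0 (mem_ball_self hc)
  refine ⟨-(‖x‖⁻¹ • x), ?_, fun u hu => ?_⟩
  · simpa [norm_smul] using inv_mul_le_one
  have hux : s ≤ u x := hx u ▸ hs u hu
  have hx0 : 0 < ‖x‖ := norm_pos_iff.2 fun h => by
    rw [h, map_zero] at hux
    exact hux.not_gt hs0
  have hcs : c * ‖x‖ ≤ s := by
    obtain ⟨g, hg, hgx⟩ := exists_dual_vector'' ℝ x
    by_contra! hlt
    have hsc : s / ‖x‖ < c := (div_lt_iff₀ hx0).2 hlt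
    have hmem : (s / ‖x‖) • g ∈ ball (0 : StrongDual ℝ E) c := mem_ball_zero_iff.2 <| by
      rw [norm_smul, Real.norm_of_nonneg (by positivity)]
      exact (mul_le_of_le_one_right (div_nonneg hs0.le hx0.le) hg).trans_lt hsc
    have hgs : ((s / ‖x‖) • g) x = s := by
      simp [hgx, hx0.ne']
    exact (hx _ ▸ hball _ hmem).ne hgs
  rw [map_neg, map_smul, smul_eq_mul, neg_le_neg_iff, le_inv_mul_iff₀ hx0, mul_comm]
  exact hcs.trans hux

theorem exists_forall_apply_le_neg_one {S : Set (StrongDual ℝ E)} (hS : S.Finite)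
    (h0 : 0 ∉ convexHull ℝ S) : ∃ z : E, ∀ u ∈ S, u z ≤ -1 := by
  obtain ⟨f, s, hs, hf⟩ :=
    geometric_hahn_banach_point_closed (convex_convexHull ℝ S) (hS.isClosed_convexHull ℝ) h0
  obtain ⟨x, hx⟩ := exists_forall_bidual_apply_eq f
  rw [map_zero] at hs
  refine ⟨-(s⁻¹ • x), fun u hu => ?_⟩
  rw [map_neg, map_smul, smul_eq_mul, neg_le_neg_iff, le_inv_mul_iff₀ hs, mul_one, ← hx]
  exact (hf u (subset_convexHull ℝ S hu)).le

end DualPairing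

theorem infEDist_Ici_eq_infEDist_Iic {G : Type*} [NormedAddCommGroup G] [PartialOrder G]
    [IsOrderedAddMonoid G] (g b : G) : infEDist b (Ici g) = infEDist g (Iic b) := by
  have h := infEDist_image (x := b) (t := Ici g) (IsometryEquiv.subLeft (g + b)).isometry
  simpa using h.symm

section Excess

variable {T : Type*} [TopologicalSpace T] [CompactSpace T]

theorem infDist_Iic_le_iff {g b : C(T, ℝ)} {r : ℝ} (hr : 0 ≤ r) :
    infDist g (Iic b) ≤ r ↔ ∀ t, g t ≤ b t + r := by
  constructor
  · refine fun h t => le_trans ?_ (add_le_add_right h (b t))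
    rw [← sub_le_iff_le_add', le_infDist nonempty_Iic]
    intro f hf
    have hfb : f t ≤ b t := hf t
    have hgf : g t - f t ≤ dist g f :=
      (Real.sub_le_dist (g t) (f t)).trans (ContinuousMap.dist_apply_le_dist t)
    linarith
  · intro h
    let f : C(T, ℝ) := ⟨fun t => min (g t) (b t), by fun_prop⟩
    have hf : f ∈ Iic b := fun t => min_le_right _ _
    refine (infDist_le_dist_of_mem hf).trans ((ContinuousMap.dist_le hr).2 fun t => ?_)
    rw [Real.dist_eq, abs_of_nonneg (sub_nonneg.2 (min_le_left _ _)), sub_le_comm]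
    exact le_min (sub_le_self _ hr) (sub_le_iff_le_add.2 (h t))

theorem le_add_infDist_Iic (g b : C(T, ℝ)) (t : T) : g t ≤ b t + infDist g (Iic b) :=
  (infDist_Iic_le_iff infDist_nonneg).1 le_rfl t

theorem exists_pos_infDist_Iic_add_smul_le {g b h : C(T, ℝ)} {m : ℝ} (hpos : 0 < infDist g (Iic b))
    (hact : ∀ t, g t = b t + infDist g (Iic b) → h t < -m) :
    ∃ s > 0, infDist (g + s • h) (Iic b) ≤ infDist g (Iic b) - m * s := by
  set M := infDist g (Iic b)
  have hlocal (t : T) :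
      ∀ᶠ q : ℝ × T in 𝓝 (0, t), 0 < q.1 → g q.2 + q.1 * h q.2 ≤ b q.2 + (M - m * q.1) := by
    rcases (le_add_infDist_Iic g b t).eq_or_lt with heq | hlt
    · have hcont : Continuous fun q : ℝ × T => h q.2 := by fun_prop
      filter_upwards [hcont.continuousAt.eventually_lt continuousAt_const (hact t heq)]
        with q hq hq0
      have hle := le_add_infDist_Iic g b q.2
      have hmul := mul_le_mul_of_nonneg_left hq.le hq0.le
      linarith
    · have hl : Continuous fun q : ℝ × T => g q.2 + q.1 * h q.2 := by fun_prop
      have hr : Continuous fun q : ℝ × T => b q.2 + (M - m * q.1) := by fun_prop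
      filter_upwards [hl.continuousAt.eventually_lt hr.continuousAt (by simpa using hlt)]
        with q hq _ using hq.le
  have hunif : ∀ᶠ s in 𝓝 (0 : ℝ), ∀ t ∈ univ, 0 < s → g t + s * h t ≤ b t + (M - m * s) :=
    isCompact_univ.eventually_forall_of_forall_eventually fun t _ => hlocal t
  have hnonneg : ∀ᶠ s in 𝓝 (0 : ℝ), 0 < M - m * s := by
    have hcont : Continuous fun s : ℝ => M - m * s := by fun_prop
    exact continuousAt_const.eventually_lt hcont.continuousAt (by simpa using hpos)
  obtain ⟨s, ⟨hs, hsM⟩, hs0⟩ :=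
    (((hunif.and hnonneg).filter_mono nhdsWithin_le_nhds).and
      (self_mem_nhdsWithin : Ioi (0 : ℝ) ∈ 𝓝[>] 0)).exists
  exact ⟨s, hs0, (infDist_Iic_le_iff hsM.le).2 fun t => hs t (mem_univ t) hs0⟩

end Excess

section HoffmanConstant

variable {E : Type*} [NormedAddCommGroup E] [NormedSpace ℝ E]
  {T : Type*} [TopologicalSpace T]

/-- The coefficient functional of the `t`-th inequality of the system `A y ≤ b`; it plays the role
of `aₜ` when the coefficients are encoded by a single operator into `C(T, ℝ)`. -/
def constraintRow (A : E →L[ℝ] C(T, ℝ)) (t : T) : StrongDual ℝ E :=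
  (ContinuousMap.evalCLM ℝ t).comp A

@[simp]
theorem constraintRow_apply (A : E →L[ℝ] C(T, ℝ)) (t : T) (y : E) :
    constraintRow A t y = A y t := rfl

variable [CompactSpace T]

/-- The indices of the most violated constraints at `y`, the largest violation being encoded as the
distance from `A y` to `Iic b`. For feasible `y` these are the constraints satisfied with
equality. -/
def activeSet (A : E →L[ℝ] C(T, ℝ)) (b : C(T, ℝ)) (y : E) : Set T :=
  {t | A y t = b t + infDist (A y) (Iic b)}

variable {A : E →L[ℝ] C(T, ℝ)} {b : C(T, ℝ)}

theorem isCompact_activeSet (y : E) : IsCompact (activeSet A b y) :=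
  (isClosed_eq (map_continuous (A y)) (by fun_prop)).isCompact

theorem zero_notMem_convexHull_constraintRow_activeSet (hb : {z | A z ≤ b}.Nonempty) {y : E}
    (hy : 0 < infDist (A y) (Iic b)) : 0 ∉ convexHull ℝ (constraintRow A '' activeSet A b y) := by
  obtain ⟨z, hz⟩ := hb
  have hsub : convexHull ℝ (constraintRow A '' activeSet A b y) ⊆ {u | u (z - y) < 0} := by
    refine convexHull_min ?_ (convex_halfSpace_lt ⟨fun _ _ => rfl, fun _ _ => rfl⟩ 0)
    rintro _ ⟨t, ht, rfl⟩
    have hzt : A z t ≤ b t := hz t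
    have hyt : A y t = b t + infDist (A y) (Iic b) := ht
    change constraintRow A t (z - y) < 0
    rw [map_sub, constraintRow_apply, constraintRow_apply]
    linarith
  exact fun h0 => lt_irrefl (0 : ℝ) (hsub h0)

variable [FiniteDimensional ℝ E]

theorem exists_forall_infDist_Iic_add_mul_norm_sub_le (A : E →L[ℝ] C(T, ℝ)) (b : C(T, ℝ)) {c : ℝ}
    (hc : 0 < c) (x : E) :
    ∃ y, ∀ z, infDist (A y) (Iic b) + c * ‖y - x‖ ≤ infDist (A z) (Iic b) + c * ‖z - x‖ := by
  refine Continuous.exists_forall_le (by fun_prop) ?_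
  refine tendsto_atTop_mono (fun z => le_add_of_nonneg_left infDist_nonneg)
    (Tendsto.const_mul_atTop hc ?_)
  simpa only [dist_eq_norm] using tendsto_dist_right_cocompact_atTop x

theorem exists_infDist_Iic_map_add_lt {c : ℝ≥0} {y : E}
    (hc : c < infEDist 0 (convexHull ℝ (constraintRow A '' activeSet A b y)))
    (hy : 0 < infDist (A y) (Iic b)) :
    ∃ v, infDist (A (y + v)) (Iic b) + c * ‖v‖ < infDist (A y) (Iic b) := by
  obtain ⟨c', hcc', hc'⟩ := ENNReal.lt_iff_exists_nnreal_btwn.1 hc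
  obtain ⟨m, hcm, hmc'⟩ := exists_between (ENNReal.coe_lt_coe.1 hcc')
  obtain ⟨d, hd, hdc⟩ := exists_norm_le_one_forall_apply_le_neg (c := c')
    (convex_convexHull ℝ (constraintRow A '' activeSet A b y))
    (NNReal.coe_pos.2 hmc'.pos) fun u hu => by
      have h := hc'.le.trans (infEDist_le_edist_of_mem hu)
      rw [edist_zero_left] at h
      exact_mod_cast h
  have hact : ∀ t ∈ activeSet A b y, A d t < -m := fun t ht =>
    (hdc _ (subset_convexHull ℝ _ ⟨t, ht, rfl⟩)).trans_lt (neg_lt_neg hmc')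
  obtain ⟨s, hs, hdesc⟩ := exists_pos_infDist_Iic_add_smul_le hy hact
  refine ⟨s • d, ?_⟩
  rw [map_add, map_smul, norm_smul, Real.norm_of_nonneg hs.le]
  calc infDist (A y + s • A d) (Iic b) + c * (s * ‖d‖)
      ≤ (infDist (A y) (Iic b) - m * s) + c * s := by
        gcongr
        exact mul_le_of_le_one_right hs.le hd
    _ < infDist (A y) (Iic b) := by
        have := mul_lt_mul_of_pos_right (NNReal.coe_lt_coe.2 hcm) hs
        linarith

theorem exists_le_mul_norm_sub_le_infDist_Iic (hb : {z | A z ≤ b}.Nonempty) {c : ℝ≥0} (hc0 : 0 < c)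
    (hc : ∀ J, IsCompact J → 0 ∉ convexHull ℝ (constraintRow A '' J) →
      c < infEDist 0 (convexHull ℝ (constraintRow A '' J))) (x : E) :
    ∃ y, A y ≤ b ∧ c * ‖y - x‖ ≤ infDist (A x) (Iic b) := by
  obtain ⟨y, hmin⟩ := exists_forall_infDist_Iic_add_mul_norm_sub_le A b (NNReal.coe_pos.2 hc0) x
  have hy0 : infDist (A y) (Iic b) = 0 := by
    by_contra hne
    have hpos : 0 < infDist (A y) (Iic b) := infDist_nonneg.lt_of_ne' hne
    obtain ⟨v, hv⟩ := exists_infDist_Iic_map_add_lt (hc _ (isCompact_activeSet y)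
      (zero_notMem_convexHull_constraintRow_activeSet hb hpos)) hpos
    have htri : c * ‖y + v - x‖ ≤ c * ‖v‖ + c * ‖y - x‖ := by
      rw [← mul_add, add_comm y, add_sub_assoc]
      gcongr
      exact norm_add_le _ _
    linarith [hmin (y + v)]
  refine ⟨y, fun t => by simpa [hy0] using le_add_infDist_Iic (A y) b t, ?_⟩
  simpa [hy0] using hmin x

theorem iInf_infEDist_mul_infEDist_le (hb : {z | A z ≤ b}.Nonempty) (x : E) :
    (⨅ (J : Set T) (_ : IsCompact J ∧ 0 ∉ convexHull ℝ (constraintRow A '' J)),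
      infEDist 0 (convexHull ℝ (constraintRow A '' J))) * infEDist x {y | A y ≤ b} ≤
      ENNReal.ofReal (infDist (A x) (Iic b)) := by
  refine ENNReal.mul_le_of_forall_lt fun c hc r hr => ?_
  lift c to ℝ≥0 using hc.ne_top
  rcases eq_zero_or_pos c with rfl | hc0
  · simp
  obtain ⟨y, hy, hle⟩ := exists_le_mul_norm_sub_le_infDist_Iic hb hc0
    (fun J hJ h0 => hc.trans_le (iInf₂_le J ⟨hJ, h0⟩)) x
  calc (c : ℝ≥0∞) * r ≤ c * edist x y := by
        gcongr
        exact hr.le.trans (infEDist_le_edist_of_mem hy)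
    _ = ENNReal.ofReal (c * ‖y - x‖) := by
        rw [ENNReal.ofReal_mul c.coe_nonneg, ENNReal.ofReal_coe_nnreal, edist_comm,
          edist_eq_enorm_sub, ofReal_norm]
    _ ≤ ENNReal.ofReal (infDist (A x) (Iic b)) := ENNReal.ofReal_le_ofReal hle

theorem infEDist_div_infEDist_le (hb : {z | A z ≤ b}.Nonempty) (x : E) :
    infEDist x {y | A y ≤ b} / infEDist b {b' | A x ≤ b'} ≤
      (⨅ (J : Set T) (_ : IsCompact J ∧ 0 ∉ convexHull ℝ (constraintRow A '' J)),
        infEDist 0 (convexHull ℝ (constraintRow A '' J)))⁻¹ := by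
  have hden : infEDist b {b' | A x ≤ b'} = ENNReal.ofReal (infDist (A x) (Iic b)) :=
    (infEDist_Ici_eq_infEDist_Iic _ _).trans
      (ENNReal.ofReal_toReal (infEDist_ne_top nonempty_Iic)).symm
  have hmul := iInf_infEDist_mul_infEDist_le hb x
  rw [hden]
  set κ := ⨅ (J : Set T) (_ : IsCompact J ∧ 0 ∉ convexHull ℝ (constraintRow A '' J)),
    infEDist 0 (convexHull ℝ (constraintRow A '' J))
  rcases eq_or_ne κ 0 with hκ | hκ
  · simp [hκ]
  refine ENNReal.div_le_of_le_mul ?_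
  rw [mul_comm, ← div_eq_mul_inv]
  exact (ENNReal.le_div_iff_mul_le (.inl hκ) (.inr ENNReal.ofReal_ne_top)).2 (mul_comm κ _ ▸ hmul)

theorem exists_inv_enorm_le_infEDist_div {J : Set T} (h0 : 0 ∉ convexHull ℝ (constraintRow A '' J))
    {u : StrongDual ℝ E} (hu : u ∈ convexHull ℝ (constraintRow A '' J)) :
    ∃ b : C(T, ℝ), {y | A y ≤ b}.Nonempty ∧
      ‖u‖ₑ⁻¹ ≤ infEDist 0 {y | A y ≤ b} / infEDist b {b' | A 0 ≤ b'} := by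
  rw [convexHull_eq_union_convexHull_finite_subsets] at hu
  obtain ⟨S, hSJ, huS⟩ := mem_iUnion₂.1 hu
  obtain ⟨z, hz⟩ := exists_forall_apply_le_neg_one S.finite_toSet
    fun h => h0 (convexHull_mono hSJ h)
  let b : C(T, ℝ) := ⟨fun t => max (A z t) (-1), by fun_prop⟩
  refine ⟨b, ⟨z, fun t => le_max_left _ _⟩, ?_⟩
  have hden : infEDist b {b' | A 0 ≤ b'} ≤ 1 := by
    have hmem : b + 1 ∈ {b' | A 0 ≤ b'} := fun t => by
      have hbt : -1 ≤ b t := le_max_right _ _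
      rw [map_zero]
      exact neg_le_iff_add_nonneg.1 hbt
    refine (infEDist_le_edist_of_mem hmem).trans ?_
    rw [edist_dist, ENNReal.ofReal_le_one]
    exact (ContinuousMap.dist_le zero_le_one).2 fun t => by simp
  have hnum : ‖u‖ₑ⁻¹ ≤ infEDist 0 {y | A y ≤ b} := le_infEDist.2 fun s hs => by
    have hus : u s ≤ -1 := by
      refine convexHull_min (t := {v | v s ≤ -1}) (fun v hv => ?_)
        (convex_halfSpace_le ⟨fun _ _ => rfl, fun _ _ => rfl⟩ _) huS
      obtain ⟨t, -, rfl⟩ := hSJ hv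
      exact (hs t).trans (max_le (hz _ hv) le_rfl)
    have habs : 1 ≤ ‖u s‖ₑ := by
      rw [Real.enorm_eq_ofReal_abs, ENNReal.one_le_ofReal]
      exact le_abs.2 (.inr (le_neg_of_le_neg hus))
    rw [edist_zero_left, ENNReal.inv_le_iff_le_mul (by simp) (by simp)]
    exact habs.trans (u.le_opENorm s)
  calc ‖u‖ₑ⁻¹ ≤ infEDist 0 {y | A y ≤ b} / 1 := by rwa [div_one]
    _ ≤ _ := ENNReal.div_le_div_left hden _

theorem iSup_infEDist_div_infEDist_eq_iSup_inv_infEDist (A : E →L[ℝ] C(T, ℝ)) :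
    (⨆ (b : C(T, ℝ)) (_ : {y | A y ≤ b}.Nonempty) (x : E),
        infEDist x {y | A y ≤ b} / infEDist b {b' | A x ≤ b'})
    =
    ⨆ (J : Set T) (_ : IsCompact J ∧ 0 ∉ convexHull ℝ (constraintRow A '' J)),
      (infEDist 0 (convexHull ℝ (constraintRow A '' J)))⁻¹ := by
  apply le_antisymm
  · simp only [← ENNReal.inv_iInf]
    exact iSup₂_le fun b hb => iSup_le fun x => infEDist_div_infEDist_le hb x
  · refine iSup₂_le fun J hJ => ?_
    simp only [infEDist, ENNReal.inv_iInf, edist_zero_left]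
    refine iSup₂_le fun u hu => ?_
    obtain ⟨b, hb, hle⟩ := exists_inv_enorm_le_infEDist_div hJ.2 hu
    exact le_iSup₂_of_le b hb (le_iSup_of_le 0 hle)

end HoffmanConstant

section Coordinates

universe u

theorem exists_linearEquiv_norm_eq {V : Type u} [AddCommGroup V] [Module ℝ V]
    (p : Seminorm ℝ V) (hp : ∀ x, p x = 0 → x = 0) :
    ∃ (E : Type u) (_ : NormedAddCommGroup E) (_ : NormedSpace ℝ E) (e : V ≃ₗ[ℝ] E),
      ∀ x, ‖e x‖ = p x := by
  let _ : NormedAddCommGroup V := AddGroupNorm.toNormedAddCommGroup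
    { p.toAddGroupSeminorm with eq_zero_of_map_eq_zero' := hp }
  let _ : NormedSpace ℝ V := ⟨fun c x => (map_smul_eq_mul p c x).le⟩
  exact ⟨V, _, _, LinearEquiv.refl ℝ V, fun _ => rfl⟩

variable {n : ℕ} {E : Type*} [NormedAddCommGroup E] [NormedSpace ℝ E]
  {e : (Fin n → ℝ) ≃ₗ[ℝ] E} {p : Seminorm ℝ (Fin n → ℝ)}

theorem pDist_eq_infEDist (he : ∀ x, ‖e x‖ = p x) (x : Fin n → ℝ) (S : Set (Fin n → ℝ)) :
    pDist p x S = infEDist (e x) (e '' S) := by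
  simp only [pDist, infEDist, iInf_image, edist_eq_enorm_sub, ← map_sub, ← ofReal_norm, he]

variable [FiniteDimensional ℝ E]

/-- The functional on `E` induced by `u ∈ ℝⁿ` through the dot product, when `e` identifies `ℝⁿ`
with `E`. -/
noncomputable def dotProductDual (e : (Fin n → ℝ) ≃ₗ[ℝ] E) : (Fin n → ℝ) ≃ₗ[ℝ] StrongDual ℝ E :=
  dotProductEquiv ℝ (Fin n) ≪≫ₗ e.symm.dualMap ≪≫ₗ LinearMap.toContinuousLinearMap

theorem dotProductDual_apply (e : (Fin n → ℝ) ≃ₗ[ℝ] E) (u : Fin n → ℝ) (y : E) :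
    dotProductDual e u y = u ⬝ᵥ e.symm y := rfl

theorem dualNorm_eq_enorm (he : ∀ x, ‖e x‖ = p x) (u : Fin n → ℝ) :
    dualNorm p u = ‖dotProductDual e u‖ₑ := by
  have hval (x : Fin n → ℝ) : dotProductDual e u (e x) = ∑ i, u i * x i := by
    rw [dotProductDual_apply, e.symm_apply_apply, dotProduct]
  refine le_antisymm (iSup₂_le fun x hx => ?_) ?_
  · rw [← hval, ← Real.norm_eq_abs, ← ofReal_norm (dotProductDual e u)]
    exact ENNReal.ofReal_le_ofReal ((dotProductDual e u).unit_le_opNorm _ ((he x).trans_le hx))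
  · rcases eq_or_ne (dualNorm p u) ⊤ with htop | htop
    · exact htop ▸ le_top
    rw [← ofReal_norm]
    refine ENNReal.ofReal_le_of_le_toReal
      ((dotProductDual e u).opNorm_le_of_unit_norm ENNReal.toReal_nonneg fun y hy => ?_)
    obtain ⟨x, rfl⟩ := e.surjective y
    rw [← ENNReal.ofReal_le_iff_le_toReal htop, hval, Real.norm_eq_abs]
    exact le_iSup₂_of_le x (he x ▸ hy).le le_rfl

theorem dualDist0_eq_infEDist (he : ∀ x, ‖e x‖ = p x) (S : Set (Fin n → ℝ)) :
    dualDist0 p S = infEDist 0 (dotProductDual e '' S) := by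
  simp only [dualDist0, infEDist, iInf_image, edist_zero_left, dualNorm_eq_enorm he, enorm]

variable {T : Type*} [TopologicalSpace T] {a : T → Fin n → ℝ}

/-- The operator `y ↦ (t ↦ aₜ'y)` of the constraint system, with `ℝⁿ` identified with `E`. -/
noncomputable def constraintOperator (e : (Fin n → ℝ) ≃ₗ[ℝ] E) (ha : Continuous a) :
    E →L[ℝ] C(T, ℝ) :=
  LinearMap.toContinuousLinearMap
    { toFun y := ⟨fun t => a t ⬝ᵥ e.symm y, by fun_prop⟩
      map_add' y z := by ext t; simp
      map_smul' c y := by ext t; simp }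

theorem constraintRow_constraintOperator (ha : Continuous a) :
    constraintRow (constraintOperator e ha) = dotProductDual e ∘ a := rfl

theorem setOf_constraintOperator_le (ha : Continuous a) (b : C(T, ℝ)) :
    {y | constraintOperator e ha y ≤ b} = e '' feas a b := by
  rw [e.image_eq_preimage_symm]
  rfl

theorem setOf_constraintOperator_apply_le (ha : Continuous a) (x : Fin n → ℝ) :
    {b | constraintOperator e ha (e x) ≤ b} = {b | x ∈ feas a b} := by
  ext b
  change e x ∈ {y | constraintOperator e ha y ≤ b} ↔ x ∈ feas a b
  rw [setOf_constraintOperator_le, e.injective.mem_set_image]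

theorem convexHull_constraintRow_image (ha : Continuous a) (J : Set T) :
    convexHull ℝ (constraintRow (constraintOperator e ha) '' J) =
      dotProductDual e '' convexHull ℝ (a '' J) := by
  rw [constraintRow_constraintOperator, image_comp]
  exact ((dotProductDual e).toLinearMap.image_convexHull _).symm

end Coordinates

theorem global_hoffman_constant_semiinfinite_general
    {n : ℕ} {T : Type*} [TopologicalSpace T] [CompactSpace T]
    {a : T → Fin n → ℝ} (ha : Continuous a)
    (p : Seminorm ℝ (Fin n → ℝ)) (hp : ∀ x, p x = 0 → x = 0) :
    (⨆ (b : C(T, ℝ)) (_ : (feas a b).Nonempty) (x : Fin n → ℝ),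
        pDist p x (feas a b) / infEDist b {b' : C(T, ℝ) | x ∈ feas a b'})
    =
    ⨆ (J : Set T) (_ : IsCompact J ∧ 0 ∉ convexHull ℝ (a '' J)),
      (dualDist0 p (convexHull ℝ (a '' J)))⁻¹ := by
  obtain ⟨E, _, _, e, he⟩ := exists_linearEquiv_norm_eq p hp
  have : FiniteDimensional ℝ E := e.finiteDimensional
  have hE := iSup_infEDist_div_infEDist_eq_iSup_inv_infEDist (constraintOperator e ha)
  simp only [setOf_constraintOperator_le, ← e.surjective.iSup_comp,
    setOf_constraintOperator_apply_le, convexHull_constraintRow_image, image_nonempty,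
    ← pDist_eq_infEDist he, ← dualDist0_eq_infEDist he] at hE
  simpa only [mem_image, EmbeddingLike.map_eq_zero_iff, exists_eq_right] using hE

end

/-- Theorem `Th_hof:global`. `T` a compact metric space, `t ↦ a_t`
continuous, `p` an arbitrary norm on `ℝⁿ`, `C(T,ℝ)` with the sup norm. The global Hoffman
constant `Hof F = sup_{b ∈ dom F, x ∈ ℝⁿ} d(x, F(b)) / d(b, F⁻¹(x))` satisfies
`Hof F = sup { d_*(0ₙ, conv{a_t : t ∈ J})⁻¹ : J ⊆ T compact, 0ₙ ∉ conv{a_t : t ∈ J} }`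
(conventions: `d(z,∅) = +∞`, `1/+∞ = 0`, `0/0 = 0`, `sup ∅ = 0`). -/
theorem global_hoffman_constant_semiinfinite
    {n : ℕ} {T : Type*} [MetricSpace T] [CompactSpace T]
    (a : T → (Fin n → ℝ)) (ha : Continuous a)
    (p : Seminorm ℝ (Fin n → ℝ)) (hp : ∀ x, p x = 0 → x = 0) :
    (⨆ (b : C(T, ℝ)) (_ : (feas a b).Nonempty) (x : Fin n → ℝ),
        pDist p x (feas a b) / infEdist b {b' : C(T, ℝ) | x ∈ feas a b'})
    =
    ⨆ (J : Set T) (_ : IsCompact J ∧ (0 : Fin n → ℝ) ∉ convexHull ℝ (a '' J)),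
      (dualDist0 p (convexHull ℝ (a '' J)))⁻¹ :=
  global_hoffman_constant_semiinfinite_general ha p hp
end

section
/- Let b̄ ∈ dom F and assume the system σ(b̄) is locally polyhedral (LOP), i.e. D(F(b̄),x) = A(x)° for every x ∈ F(b̄). Then Hof F(b̄) = sup_{x ∈ E(b̄)} clm F(b̄,x) = sup_{x ∈ E(b̄)} sup_{D ∈ D(x)} d_*(0ₙ, conv{a_t : t ∈ D})⁻¹, where E(b̄) is the set of extreme points of F(b̄) ∩ span{a_t : t ∈ T}, and D(x) is the family of subsets D ⊆ T(x) such that the system { a_t'd = 1 for t ∈ D, a_t'd < 1 for t ∈ T(x) \ D } has a solution d ∈ ℝⁿ. -/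
open Filter Set EMetric
open scoped Topology ENNReal NNReal

/-- The set of active indices `T(x) = {t ∈ T : a_t'x = b̄_t}` at a point `x`. -/
def activeIdx {n : ℕ} {T : Type*} [TopologicalSpace T]
    (a : T → (Fin n → ℝ)) (bbar : C(T, ℝ)) (x : Fin n → ℝ) : Set T :=
  {t : T | (∑ i, a t i * x i) = bbar t}

/-- The convex conical hull `cone S` (containing `0ₙ`). -/
def coneHull {n : ℕ} (S : Set (Fin n → ℝ)) : Set (Fin n → ℝ) :=
  insert 0 {x | ∃ c : ℝ, 0 ≤ c ∧ ∃ y ∈ convexHull ℝ S, x = c • y}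

/-- The negative polar `K° = {u : k'u ≤ 0 for all k ∈ K}`. -/
def negPolar {n : ℕ} (K : Set (Fin n → ℝ)) : Set (Fin n → ℝ) :=
  {u | ∀ k ∈ K, (∑ i, k i * u i) ≤ 0}

/-- The cone of feasible directions of `F(b̄)` at `x`. -/
def feasDirs {n : ℕ} {T : Type*} [TopologicalSpace T]
    (a : T → (Fin n → ℝ)) (bbar : C(T, ℝ)) (x : Fin n → ℝ) : Set (Fin n → ℝ) :=
  {d | ∃ ε : ℝ, 0 < ε ∧ ∀ α ∈ Set.Icc (0 : ℝ) ε, x + α • d ∈ feas a bbar}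

/-- The family `D(x)` of subsets `D ⊆ T(x)` such that the system
`{a_t'd = 1 (t ∈ D), a_t'd < 1 (t ∈ T(x) \ D)}` is consistent in `d ∈ ℝⁿ`. -/
def Dfam {n : ℕ} {T : Type*} [TopologicalSpace T]
    (a : T → (Fin n → ℝ)) (bbar : C(T, ℝ)) (x : Fin n → ℝ) : Set (Set T) :=
  {D | D ⊆ activeIdx a bbar x ∧ ∃ d : Fin n → ℝ,
      (∀ t ∈ D, (∑ i, a t i * d i) = 1) ∧
      (∀ t ∈ activeIdx a bbar x \ D, (∑ i, a t i * d i) < 1)}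

/-- The set `E(b̄)` of extreme points of `F(b̄) ∩ span{a_t : t ∈ T}`. -/
def Eset {n : ℕ} {T : Type*} [TopologicalSpace T]
    (a : T → (Fin n → ℝ)) (bbar : C(T, ℝ)) : Set (Fin n → ℝ) :=
  Set.extremePoints ℝ (feas a bbar ∩ (Submodule.span ℝ (Set.range a) : Set (Fin n → ℝ)))

/-- The calmness modulus of `F` at `(b̄, x̄)`:
`clm F(b̄,x̄) = limsup_{(b,x) → (b̄,x̄), x ∈ F(b)} d(x, F(b̄)) / ‖b − b̄‖_∞`. -/
noncomputable def clmF {n : ℕ} {T : Type*} [TopologicalSpace T] [CompactSpace T]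
    (a : T → (Fin n → ℝ)) (p : Seminorm ℝ (Fin n → ℝ))
    (bbar : C(T, ℝ)) (xbar : Fin n → ℝ) : ℝ≥0∞ :=
  Filter.limsup
    (fun q : C(T, ℝ) × (Fin n → ℝ) => pDist p q.2 (feas a bbar) / edist q.1 bbar)
    (𝓝 (bbar, xbar) ⊓ 𝓟 {q : C(T, ℝ) × (Fin n → ℝ) | q.2 ∈ feas a q.1})

/-- The Hoffman modulus of `F` at `b̄ ∈ dom F`:
`Hof F(b̄) = sup_{x ∈ ℝⁿ} d(x, F(b̄)) / d(b̄, F⁻¹(x))`. -/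
noncomputable def hofF {n : ℕ} {T : Type*} [TopologicalSpace T] [CompactSpace T]
    (a : T → (Fin n → ℝ)) (p : Seminorm ℝ (Fin n → ℝ)) (bbar : C(T, ℝ)) : ℝ≥0∞ :=
  ⨆ x : Fin n → ℝ, pDist p x (feas a bbar) / infEdist bbar {b : C(T, ℝ) | x ∈ feas a b}

/-! Projecting `x` onto `F(b̄)` at `y`, local polyhedrality reduces `d(x, F(b̄))` to the distance
from `x - y` to the polar of the active gradients at `y`, so `Hof F(b̄)` is at most the supremum
over `y ∈ F(b̄)` of the Hoffman moduli of the homogeneous systems `aₜ'd ≤ 0`, `t ∈ T(y)`.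
Such a modulus can only grow along an inclusion of active sets. After `y` is projected onto `span
{aₜ}`, moving along directions orthogonal to the active gradients until the boundary of `F(b̄)`
is hit enlarges the span of the active gradients, and this ends at an extreme point `z ∈ E(b̄)`
with `T(y) ⊆ T(z)`.

At `z`, a strict solution `d` of `aₜ'd < 1`, `t ∈ T(z)`, makes `z + αd` feasible for `b̄ + α` with
small `α > 0`; hence the homogeneous modulus at `z` is at most `clm F(b̄, z)`, which is trivially at
most `Hof F(b̄)`, and all these suprema agree. The formula in terms of `d_*` is a statement about
homogeneous systems: `≥` is weak duality, and for `≤`, if every exposed face of active gradients has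
dual distance larger than `σ`, separating it from the dual ball of radius `σ` shows that the largest
violation decreases at rate more than `σ`, so a minimiser of `violation + σ p(· - d)` violates
nothing.
-/

section Compactness

variable {X : Type*} [TopologicalSpace X]

lemma eventually_forall_mul_lt_of_isCompact {K : Set X} (hK : IsCompact K) {s h : X → ℝ}
    (hs : Continuous s) (hh : Continuous h) (hs₀ : ∀ x ∈ K, 0 ≤ s x)
    (hneg : ∀ x ∈ K, s x = 0 → h x < 0) :
    ∀ᶠ α in 𝓝[>] (0 : ℝ), ∀ x ∈ K, α * h x < s x := by
  have hlocal : ∀ x ∈ K, ∀ᶠ q : ℝ × X in 𝓝 (0, x), 0 < q.1 → q.2 ∈ K → q.1 * h q.2 < s q.2 := by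
    intro x hx
    rcases (hs₀ x hx).eq_or_lt with h0 | hpos
    · have hlt : ∀ᶠ q : ℝ × X in 𝓝 (0, x), h q.2 < 0 :=
        (hh.comp continuous_snd).continuousAt.eventually_lt_const (hneg x hx h0.symm)
      filter_upwards [hlt] with q hq hα hqK
      exact (mul_neg_of_pos_of_neg hα hq).trans_le (hs₀ q.2 hqK)
    · have hlt : ∀ᶠ q : ℝ × X in 𝓝 (0, x), q.1 * h q.2 < s q.2 := by
        refine ContinuousAt.eventually_lt ?_ ?_ (by simpa using hpos) <;> fun_prop
      filter_upwards [hlt] with q hq _ _ using hq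
  rw [eventually_nhdsWithin_iff]
  filter_upwards [hK.eventually_forall_of_forall_eventually
    (P := fun α x => 0 < α → x ∈ K → α * h x < s x) hlocal] with α hα hα₀ x hx
  exact hα x hx hα₀ hx

end Compactness

section Seminorm

variable {E : Type*} [AddCommGroup E] [Module ℝ E]

lemma exists_dual_apply_eq_seminorm (p : Seminorm ℝ E) (x : E) :
    ∃ g : Module.Dual ℝ E, g x = p x ∧ ∀ y, g y ≤ p y := by
  rcases eq_or_ne x 0 with rfl | hx
  · exact ⟨0, by simp, fun y => apply_nonneg p y⟩
  set coord : (ℝ ∙ x) →ₗ[ℝ] ℝ := (LinearEquiv.coord ℝ E x hx).toLinearMap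
  have hcoord : ∀ y : ℝ ∙ x, (p x • coord) y ≤ p y := fun y => by
    calc p x * coord y ≤ p x * ‖coord y‖ := by gcongr; exact Real.le_norm_self _
      _ = p (coord y • x) := by rw [map_smul_eq_mul, mul_comm]
      _ = p y := congrArg p (LinearEquiv.coord_apply_smul ℝ E x hx y)
  obtain ⟨g, hg, hgp⟩ :=
    Module.Dual.exists_extension_of_le_seminorm_real _ (p x • coord) hcoord
  refine ⟨g, ?_, fun y => (le_abs_self _).trans (hgp y)⟩
  have hself : coord ⟨x, Submodule.mem_span_singleton_self x⟩ = 1 := LinearEquiv.coord_self ℝ E x hx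
  simpa [hself] using hg ⟨x, Submodule.mem_span_singleton_self x⟩

end Seminorm

section FiniteDimensional

variable {E : Type*} [NormedAddCommGroup E] [NormedSpace ℝ E] [FiniteDimensional ℝ E]
  {p : Seminorm ℝ E}

lemma continuous_seminorm (p : Seminorm ℝ E) : Continuous p :=
  p.convexOn.locallyLipschitz.continuous

lemma exists_pos_mul_norm_le_seminorm (hp : ∀ x, p x = 0 → x = 0) :
    ∃ c : ℝ, 0 < c ∧ ∀ x, c * ‖x‖ ≤ p x := by
  have hpos : ∀ u ∈ Metric.sphere (0 : E) 1, 0 < p u := fun u hu =>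
    (apply_nonneg p u).lt_of_ne' fun h => Metric.ne_of_mem_sphere hu one_ne_zero (hp u h)
  obtain ⟨c, hc, hcp⟩ := (isCompact_sphere (0 : E) 1).exists_forall_le'
    (continuous_seminorm p).continuousOn hpos
  refine ⟨c, hc, fun x => ?_⟩
  rcases eq_or_ne x 0 with rfl | hx
  · simp
  have hunit := hcp (‖x‖⁻¹ • x) (by simpa using norm_smul_inv_norm (𝕜 := ℝ) hx)
  rwa [map_smul_eq_mul, norm_inv, norm_norm, inv_mul_eq_div, le_div_iff₀ (norm_pos_iff.2 hx)]
    at hunit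

lemma tendsto_seminorm_sub_cocompact (hp : ∀ x, p x = 0 → x = 0) (d : E) :
    Tendsto (fun x => p (x - d)) (cocompact E) atTop := by
  obtain ⟨c, hc, hcp⟩ := exists_pos_mul_norm_le_seminorm hp
  have hshift : Tendsto (fun x => x - d) (cocompact E) (cocompact E) :=
    (Homeomorph.subRight d).isClosedEmbedding.tendsto_cocompact
  exact tendsto_atTop_mono (fun x => hcp (x - d))
    (((tendsto_norm_cocompact_atTop).comp hshift).const_mul_atTop hc)

lemma exists_isMinOn_seminorm_sub (hp : ∀ x, p x = 0 → x = 0) {S : Set E} (hS : IsClosed S)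
    (hne : S.Nonempty) (x : E) : ∃ y ∈ S, IsMinOn (fun y => p (y - x)) S y := by
  obtain ⟨y₀, hy₀⟩ := hne
  have hcont := continuous_seminorm p
  exact ContinuousOn.exists_isMinOn' (by fun_prop) hS hy₀
    (((tendsto_seminorm_sub_cocompact hp x).eventually_ge_atTop _).filter_mono inf_le_left)

lemma exists_eq_zero_of_forall_exists_add_mul_lt (hp : ∀ x, p x = 0 → x = 0) {f : E → ℝ}
    (hf : Continuous f) (hf₀ : ∀ x, 0 ≤ f x) {ρ : ℝ} (hρ : 0 < ρ)
    (hdesc : ∀ x, 0 < f x → ∃ y, f y + ρ * p (y - x) < f x) (d : E) :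
    ∃ s, f s = 0 ∧ ρ * p (s - d) ≤ f d := by
  have hcont := continuous_seminorm p
  obtain ⟨s, hs⟩ := Continuous.exists_forall_le (f := fun x => f x + ρ * p (x - d)) (by fun_prop)
    (tendsto_atTop_mono (fun x => le_add_of_nonneg_left (hf₀ x))
      ((tendsto_seminorm_sub_cocompact hp d).const_mul_atTop hρ))
  refine ⟨s, ((hf₀ s).eq_or_lt.resolve_right fun hpos => ?_).symm, ?_⟩
  · obtain ⟨y, hy⟩ := hdesc s hpos
    have htri : p (y - d) ≤ p (y - s) + p (s - d) := by
      simpa only [sub_add_sub_cancel] using map_add_le_add p (y - s) (s - d)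
    linarith [hs y, mul_le_mul_of_nonneg_left htri hρ.le]
  · have hsd := hs d
    simp only [sub_self, map_zero, mul_zero, add_zero] at hsd
    linarith [hf₀ s]

end FiniteDimensional

section DualNorm

variable {n : ℕ} {p : Seminorm ℝ (Fin n → ℝ)}

lemma exists_dotProduct_eq_seminorm (p : Seminorm ℝ (Fin n → ℝ)) (x : Fin n → ℝ) :
    ∃ g : Fin n → ℝ, g ⬝ᵥ x = p x ∧ ∀ y, g ⬝ᵥ y ≤ p y := by
  obtain ⟨g, hgx, hg⟩ := exists_dual_apply_eq_seminorm p x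
  obtain ⟨u, rfl⟩ := (dotProductEquiv ℝ (Fin n)).surjective g
  exact ⟨u, hgx, hg⟩

lemma convex_setOf_dotProduct_le (x : Fin n → ℝ) (c : ℝ) : Convex ℝ {u | u ⬝ᵥ x ≤ c} :=
  convex_halfSpace_le ⟨fun u v => add_dotProduct u v x, fun r u => smul_dotProduct r u x⟩ c

/-- The ball of radius `σ` of the dual norm, described by the inequalities `u'x ≤ σ p(x)` so that
it is visibly an intersection of half-spaces. -/
def dualBall (p : Seminorm ℝ (Fin n → ℝ)) (σ : ℝ) : Set (Fin n → ℝ) :=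
  {u | ∀ x, u ⬝ᵥ x ≤ σ * p x}

lemma convex_dualBall (σ : ℝ) : Convex ℝ (dualBall p σ) := by
  simpa only [dualBall, ofPred_forall] using convex_iInter fun x =>
    convex_setOf_dotProduct_le x (σ * p x)

lemma dualBall_mem_nhds_zero (hp : ∀ x, p x = 0 → x = 0) {σ : ℝ} (hσ : 0 < σ) :
    dualBall p σ ∈ 𝓝 0 := by
  obtain ⟨c, hc, hcp⟩ := exists_pos_mul_norm_le_seminorm hp
  have hsmall : ∀ᶠ u : Fin n → ℝ in 𝓝 0, ∑ i, |u i| < σ * c :=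
    Tendsto.eventually_lt_const (by simpa using mul_pos hσ hc)
      (Continuous.tendsto (by fun_prop) 0)
  filter_upwards [hsmall] with u hu x
  calc u ⬝ᵥ x ≤ ∑ i, |u i| * ‖x‖ := Finset.sum_le_sum fun i _ => by
        rw [← abs_norm x]
        refine (le_abs_self _).trans ?_
        rw [abs_mul, abs_norm]
        exact mul_le_mul_of_nonneg_left (norm_le_pi_norm x i) (abs_nonneg _)
    _ = (∑ i, |u i|) * ‖x‖ := (Finset.sum_mul _ _ _).symm
    _ ≤ σ * c * ‖x‖ := by gcongr
    _ = σ * (c * ‖x‖) := mul_assoc _ _ _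
    _ ≤ σ * p x := mul_le_mul_of_nonneg_left (hcp x) hσ.le

lemma dualNorm_le_of_mem_dualBall {σ : ℝ} (hσ : 0 ≤ σ) {u : Fin n → ℝ} (hu : u ∈ dualBall p σ) :
    dualNorm p u ≤ ENNReal.ofReal σ := by
  refine iSup₂_le fun x hx => ENNReal.ofReal_le_ofReal ?_
  have habs : |u ⬝ᵥ x| ≤ σ * p x :=
    abs_le'.2 ⟨hu x, by simpa only [dotProduct_neg, map_neg_eq_map] using hu (-x)⟩
  exact habs.trans (mul_le_of_le_one_right hσ hx)

lemma exists_ne_zero_forall_mul_le_dotProduct (hp : ∀ x, p x = 0 → x = 0) {K : Set (Fin n → ℝ)}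
    (hK : Convex ℝ K) (hne : K.Nonempty) {ρ : ℝ} (hρ : 0 < ρ)
    (hKρ : ∀ w ∈ K, ENNReal.ofReal ρ < dualNorm p w) :
    ∃ e ≠ 0, ∀ w ∈ K, ρ * p e ≤ w ⬝ᵥ e := by
  have hdisj : Disjoint (dualBall p ρ) K := Set.disjoint_left.2 fun w hw hwK =>
    (hKρ w hwK).not_ge (dualNorm_le_of_mem_dualBall hρ.le hw)
  obtain ⟨f, u, hf, hball, hfK⟩ := geometric_hahn_banach_of_nonempty_interior (convex_dualBall ρ) hK
    (hdisj.mono_left interior_subset)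
    ⟨0, mem_interior_iff_mem_nhds.2 (dualBall_mem_nhds_zero hp hρ)⟩ hne
  obtain ⟨e, he⟩ := (dotProductEquiv ℝ (Fin n)).surjective f
  have hfe : ∀ w, f w = w ⬝ᵥ e := fun w =>
    (LinearMap.congr_fun he w).symm.trans (dotProduct_comm e w)
  refine ⟨e, fun h0 => hf (ContinuousLinearMap.ext fun w => by simp [hfe, h0]), fun w hw => ?_⟩
  obtain ⟨g, hge, hg⟩ := exists_dotProduct_eq_seminorm p e
  have hgball : ρ • g ∈ dualBall p ρ := fun x => by
    rw [smul_dotProduct, smul_eq_mul]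
    exact mul_le_mul_of_nonneg_left (hg x) hρ.le
  calc ρ * p e = f (ρ • g) := by rw [hfe, smul_dotProduct, hge, smul_eq_mul]
    _ ≤ u := hball _ hgball
    _ ≤ f w := hfK w hw
    _ = w ⬝ᵥ e := hfe w

lemma ofReal_dotProduct_le (hp : ∀ x, p x = 0 → x = 0) (u x : Fin n → ℝ) :
    ENNReal.ofReal (u ⬝ᵥ x) ≤ dualNorm p u * ENNReal.ofReal (p x) := by
  rcases (apply_nonneg p x).eq_or_lt with h | h
  · simp [hp x h.symm]
  have hunit : p ((p x)⁻¹ • x) ≤ 1 := by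
    rw [map_smul_eq_mul, Real.norm_of_nonneg (inv_nonneg.2 h.le), inv_mul_cancel₀ h.ne']
  have hscale : u ⬝ᵥ x = (u ⬝ᵥ ((p x)⁻¹ • x)) * p x := by
    rw [dotProduct_smul, smul_eq_mul, mul_right_comm, inv_mul_cancel₀ h.ne', one_mul]
  calc ENNReal.ofReal (u ⬝ᵥ x)
      ≤ ENNReal.ofReal (|u ⬝ᵥ ((p x)⁻¹ • x)| * p x) := by
        rw [hscale]
        gcongr
        exact le_abs_self _
    _ = ENNReal.ofReal |u ⬝ᵥ ((p x)⁻¹ • x)| * ENNReal.ofReal (p x) :=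
        ENNReal.ofReal_mul (abs_nonneg _)
    _ ≤ dualNorm p u * ENNReal.ofReal (p x) := by
        gcongr
        exact le_iSup₂_of_le ((p x)⁻¹ • x) hunit le_rfl

end DualNorm

section Distance

variable {n : ℕ} {p : Seminorm ℝ (Fin n → ℝ)} {S : Set (Fin n → ℝ)}

lemma le_pDist_iff {x : Fin n → ℝ} {c : ℝ≥0∞} :
    c ≤ pDist p x S ↔ ∀ s ∈ S, c ≤ ENNReal.ofReal (p (x - s)) :=
  le_iInf₂_iff

lemma pDist_le {x s : Fin n → ℝ} (hs : s ∈ S) : pDist p x S ≤ ENNReal.ofReal (p (x - s)) :=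
  iInf₂_le s hs

lemma pDist_eq_zero_of_mem {x : Fin n → ℝ} (hx : x ∈ S) : pDist p x S = 0 :=
  nonpos_iff_eq_zero.1 <| (pDist_le hx).trans_eq <| by rw [sub_self, map_zero, ENNReal.ofReal_zero]

lemma pDist_sub_le_of_forall_sub_mem {K : Set (Fin n → ℝ)} {z : Fin n → ℝ}
    (h : ∀ s ∈ S, s - z ∈ K) (x : Fin n → ℝ) : pDist p (x - z) K ≤ pDist p x S :=
  le_pDist_iff.2 fun s hs =>
    (pDist_le (h s hs)).trans_eq <| by rw [sub_sub_sub_cancel_right]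

lemma inv_dualNorm_le_pDist (hp : ∀ x, p x = 0 → x = 0) {u x : Fin n → ℝ} (hux : 1 ≤ u ⬝ᵥ x)
    (hu : ∀ s ∈ S, u ⬝ᵥ s ≤ 0) : (dualNorm p u)⁻¹ ≤ pDist p x S := by
  refine le_pDist_iff.2 fun s hs => ?_
  rw [← one_div]
  refine ENNReal.div_le_of_le_mul' ?_
  calc (1 : ℝ≥0∞) = ENNReal.ofReal 1 := ENNReal.ofReal_one.symm
    _ ≤ ENNReal.ofReal (u ⬝ᵥ (x - s)) := by
        gcongr
        rw [dotProduct_sub]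
        linarith [hu s hs]
    _ ≤ dualNorm p u * ENNReal.ofReal (p (x - s)) := ofReal_dotProduct_le hp u (x - s)

end Distance

section NegPolar

variable {n : ℕ} {p : Seminorm ℝ (Fin n → ℝ)} {A : Set (Fin n → ℝ)}

lemma mem_negPolar {d : Fin n → ℝ} : d ∈ negPolar A ↔ ∀ v ∈ A, v ⬝ᵥ d ≤ 0 := Iff.rfl

lemma dotProduct_le_of_mem_convexHull {d : Fin n → ℝ} {c : ℝ} (h : ∀ v ∈ A, v ⬝ᵥ d ≤ c)
    {w : Fin n → ℝ} (hw : w ∈ convexHull ℝ A) : w ⬝ᵥ d ≤ c :=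
  convexHull_min h (convex_setOf_dotProduct_le d c) hw

lemma negPolar_coneHull : negPolar (coneHull A) = negPolar A := by
  ext d
  refine ⟨fun h v hv => h v (Or.inr ⟨1, zero_le_one, v, subset_convexHull ℝ A hv,
    (one_smul ℝ v).symm⟩), fun h => ?_⟩
  rintro _ (rfl | ⟨c, hc, w, hw, rfl⟩)
  · exact (zero_dotProduct d).le
  · change (c • w) ⬝ᵥ d ≤ 0
    rw [smul_dotProduct]
    exact mul_nonpos_of_nonneg_of_nonpos hc (dotProduct_le_of_mem_convexHull h hw)

lemma smul_mem_negPolar {d : Fin n → ℝ} (hd : d ∈ negPolar A) {c : ℝ} (hc : 0 ≤ c) :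
    c • d ∈ negPolar A := fun v hv => by
  change v ⬝ᵥ (c • d) ≤ 0
  rw [dotProduct_smul]
  exact mul_nonpos_of_nonneg_of_nonpos hc (hd v hv)

lemma ofReal_mul_pDist_negPolar_le (d : Fin n → ℝ) {c : ℝ} (hc : 0 < c) :
    ENNReal.ofReal c * pDist p d (negPolar A) ≤ pDist p (c • d) (negPolar A) := by
  refine le_pDist_iff.2 fun s hs => ?_
  calc ENNReal.ofReal c * pDist p d (negPolar A)
      ≤ ENNReal.ofReal c * ENNReal.ofReal (p (d - c⁻¹ • s)) := by
        gcongr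
        exact pDist_le (smul_mem_negPolar hs (inv_nonneg.2 hc.le))
    _ = ENNReal.ofReal (p (c • (d - c⁻¹ • s))) := by
        rw [map_smul_eq_mul, Real.norm_of_nonneg hc.le, ENNReal.ofReal_mul hc.le]
    _ = ENNReal.ofReal (p (c • d - s)) := by rw [smul_sub, smul_inv_smul₀ hc.ne']

end NegPolar

section PolarHof

variable {n : ℕ} {p : Seminorm ℝ (Fin n → ℝ)} {A : Set (Fin n → ℝ)}

/-- The Hoffman modulus of the homogeneous system `v'd ≤ 0`, `v ∈ A`: the largest distance to its
solution set `negPolar A` from a point violating no inequality by more than `1`. -/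
noncomputable def polarHof (p : Seminorm ℝ (Fin n → ℝ)) (A : Set (Fin n → ℝ)) : ℝ≥0∞ :=
  ⨆ (d : Fin n → ℝ) (_ : ∀ v ∈ A, v ⬝ᵥ d ≤ 1), pDist p d (negPolar A)

lemma pDist_le_polarHof {d : Fin n → ℝ} (hd : ∀ v ∈ A, v ⬝ᵥ d ≤ 1) :
    pDist p d (negPolar A) ≤ polarHof p A :=
  le_iSup₂ (f := fun (d : Fin n → ℝ) (_ : ∀ v ∈ A, v ⬝ᵥ d ≤ 1) => pDist p d (negPolar A)) d hd

lemma pDist_le_ofReal_mul_polarHof {d : Fin n → ℝ} {c : ℝ} (hc : 0 ≤ c)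
    (hd : ∀ v ∈ A, v ⬝ᵥ d ≤ c) : pDist p d (negPolar A) ≤ ENNReal.ofReal c * polarHof p A := by
  rcases hc.eq_or_lt with rfl | hc
  · simp [pDist_eq_zero_of_mem (mem_negPolar.2 hd)]
  have hscaled : ∀ v ∈ A, v ⬝ᵥ (c⁻¹ • d) ≤ 1 := fun v hv => by
    rw [dotProduct_smul, smul_eq_mul, inv_mul_le_iff₀ hc, mul_one]
    exact hd v hv
  calc pDist p d (negPolar A)
      = ENNReal.ofReal c * (ENNReal.ofReal c⁻¹ * pDist p d (negPolar A)) := by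
        rw [← mul_assoc, ← ENNReal.ofReal_mul hc.le, mul_inv_cancel₀ hc.ne', ENNReal.ofReal_one,
          one_mul]
    _ ≤ ENNReal.ofReal c * polarHof p A := by
        gcongr
        exact (ofReal_mul_pDist_negPolar_le d (inv_pos.2 hc)).trans (pDist_le_polarHof hscaled)

lemma polarHof_le_of_forall_lt {M : ℝ≥0∞}
    (h : ∀ d, (∀ v ∈ A, v ⬝ᵥ d < 1) → pDist p d (negPolar A) ≤ M) : polarHof p A ≤ M := by
  refine iSup₂_le fun d hd => ENNReal.le_of_forall_lt_one_mul_le fun r hr => ?_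
  rcases eq_or_ne r 0 with rfl | hr₀
  · simp
  lift r to ℝ≥0 using hr.ne_top
  have hr₀ : (0 : ℝ) < r := by exact_mod_cast pos_iff_ne_zero.2 (ENNReal.coe_ne_zero.1 hr₀)
  have hr : (r : ℝ) < 1 := by exact_mod_cast hr
  rw [← ENNReal.ofReal_coe_nnreal]
  refine (ofReal_mul_pDist_negPolar_le d hr₀).trans (h _ fun v hv => ?_)
  rw [dotProduct_smul, smul_eq_mul]
  exact (mul_le_of_le_one_right hr₀.le (hd v hv)).trans_lt hr

lemma polarHof_setOf_dotProduct_eq_zero_le (hA : IsCompact A) {w : Fin n → ℝ}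
    (hw : ∀ v ∈ A, 0 ≤ v ⬝ᵥ w) : polarHof p {v ∈ A | v ⬝ᵥ w = 0} ≤ polarHof p A := by
  refine polarHof_le_of_forall_lt fun d hd => ?_
  set F := {v ∈ A | v ⬝ᵥ w = 0}
  obtain ⟨α, hα, hα₀⟩ : ∃ α : ℝ, (∀ v ∈ A, α * (v ⬝ᵥ d - 1) < v ⬝ᵥ w) ∧ 0 < α :=
    ((eventually_forall_mul_lt_of_isCompact hA (by fun_prop) (by fun_prop) hw fun v hv hvw =>
      sub_neg.2 (hd v ⟨hv, hvw⟩)).and self_mem_nhdsWithin).exists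
  have hviol : ∀ v ∈ A, v ⬝ᵥ (α • d - w) ≤ α := fun v hv => by
    rw [dotProduct_sub, dotProduct_smul, smul_eq_mul]
    linarith [hα v hv]
  have hshift : ∀ s ∈ negPolar A, s - -w ∈ negPolar F := fun s hs v hv => by
    change v ⬝ᵥ (s - -w) ≤ 0
    rw [sub_neg_eq_add, dotProduct_add, hv.2, add_zero]
    exact hs v hv.1
  have hscaled : ENNReal.ofReal α * pDist p d (negPolar F) ≤ ENNReal.ofReal α * polarHof p A :=
    calc ENNReal.ofReal α * pDist p d (negPolar F)
        ≤ pDist p (α • d) (negPolar F) := ofReal_mul_pDist_negPolar_le d hα₀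
      _ = pDist p (α • d - w - -w) (negPolar F) := by rw [sub_neg_eq_add, sub_add_cancel]
      _ ≤ pDist p (α • d - w) (negPolar A) := pDist_sub_le_of_forall_sub_mem hshift _
      _ ≤ ENNReal.ofReal α * polarHof p A := pDist_le_ofReal_mul_polarHof hα₀.le hviol
  exact (ENNReal.mul_le_mul_iff_right (ENNReal.ofReal_pos.2 hα₀).ne'
    ENNReal.ofReal_ne_top).1 hscaled

end PolarHof

section FaceFormula

variable {n : ℕ} {p : Seminorm ℝ (Fin n → ℝ)} {A : Set (Fin n → ℝ)}

/-- The largest violation at `d` of the inequalities `v'd ≤ 0`, `v ∈ A`. The vector `0` is adjoined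
to `A` so that the value is nonnegative, and `0` on solutions, also when `A` is empty. -/
noncomputable def maxViolation (A : Set (Fin n → ℝ)) (d : Fin n → ℝ) : ℝ :=
  sSup ((· ⬝ᵥ d) '' insert 0 A)

lemma dotProduct_le_maxViolation (hA : IsCompact A) {v : Fin n → ℝ} (hv : v ∈ insert 0 A)
    (d : Fin n → ℝ) : v ⬝ᵥ d ≤ maxViolation A d :=
  le_csSup ((hA.insert 0).image (by fun_prop)).bddAbove (mem_image_of_mem _ hv)

lemma maxViolation_nonneg (hA : IsCompact A) (d : Fin n → ℝ) : 0 ≤ maxViolation A d := by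
  simpa using dotProduct_le_maxViolation hA (mem_insert 0 A) d

lemma maxViolation_le {d : Fin n → ℝ} {c : ℝ} (hc : 0 ≤ c) (h : ∀ v ∈ A, v ⬝ᵥ d ≤ c) :
    maxViolation A d ≤ c := by
  refine csSup_le ((insert_nonempty 0 A).image _) ?_
  rintro _ ⟨v, rfl | hv, rfl⟩
  · simpa using hc
  · exact h v hv

lemma maxViolation_lt_iff (hA : IsCompact A) {d : Fin n → ℝ} {c : ℝ} :
    maxViolation A d < c ↔ ∀ v ∈ insert 0 A, v ⬝ᵥ d < c :=
  (hA.insert 0).sSup_lt_iff_of_continuous (insert_nonempty 0 A) (by fun_prop) c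

lemma continuous_maxViolation (hA : IsCompact A) : Continuous (maxViolation A) :=
  (hA.insert 0).continuous_sSup (f := fun d v => v ⬝ᵥ d) (by fun_prop)

lemma mem_negPolar_of_maxViolation_eq_zero (hA : IsCompact A) {d : Fin n → ℝ}
    (hd : maxViolation A d = 0) : d ∈ negPolar A := fun _ hv =>
  (dotProduct_le_maxViolation hA (mem_insert_of_mem 0 hv) d).trans_eq hd

lemma exists_dotProduct_eq_maxViolation (hA : IsCompact A) {d : Fin n → ℝ}
    (hd : 0 < maxViolation A d) : ∃ v ∈ A, v ⬝ᵥ d = maxViolation A d := by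
  obtain ⟨v, rfl | hv, hmax⟩ := (hA.insert 0).exists_sSup_image_eq (f := (· ⬝ᵥ d))
    (insert_nonempty 0 A) (by fun_prop)
  · exact absurd (hmax.trans (zero_dotProduct d)) hd.ne'
  · exact ⟨v, hv, hmax.symm⟩

lemma exists_maxViolation_add_mul_lt (hp : ∀ x, p x = 0 → x = 0) (hA : IsCompact A)
    {d : Fin n → ℝ} (hd : 0 < maxViolation A d) {σ : ℝ}
    (hface : ENNReal.ofReal σ < dualDist0 p (convexHull ℝ {v ∈ A | v ⬝ᵥ d = maxViolation A d})) :
    ∃ e, maxViolation A e + σ * p (e - d) < maxViolation A d := by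
  obtain ⟨ρ, -, hσρ, hρ⟩ := ENNReal.lt_iff_exists_real_btwn.1 hface
  obtain ⟨w, hw₀, hw⟩ := exists_ne_zero_forall_mul_le_dotProduct hp (convex_convexHull ℝ _)
    (Set.Nonempty.convexHull (exists_dotProduct_eq_maxViolation hA hd))
    (ENNReal.ofReal_pos.1 (bot_le.trans_lt hσρ)) fun u hu => hρ.trans_le (iInf₂_le u hu)
  have hpw : σ * p w < ρ * p w :=
    mul_lt_mul_of_pos_right (ENNReal.ofReal_lt_ofReal_iff'.1 hσρ).1
      ((apply_nonneg p w).lt_of_ne' (mt (hp w) hw₀))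
  have hneg : ∀ v ∈ insert 0 A, maxViolation A d - v ⬝ᵥ d = 0 → σ * p w - v ⬝ᵥ w < 0 := by
    intro v hv hvd
    have hvA : v ∈ A := hv.resolve_left fun h0 => by
      rw [h0, zero_dotProduct, sub_zero] at hvd
      exact hd.ne' hvd
    linarith [hw v (subset_convexHull ℝ _ ⟨hvA, (sub_eq_zero.1 hvd).symm⟩)]
  obtain ⟨α, hα, hα₀⟩ : ∃ α : ℝ,
      (∀ v ∈ insert 0 A, α * (σ * p w - v ⬝ᵥ w) < maxViolation A d - v ⬝ᵥ d) ∧ 0 < α :=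
    ((eventually_forall_mul_lt_of_isCompact (hA.insert 0) (by fun_prop) (by fun_prop)
      (fun v hv => sub_nonneg.2 (dotProduct_le_maxViolation hA hv d)) hneg).and
        self_mem_nhdsWithin).exists
  refine ⟨d - α • w, ?_⟩
  rw [sub_sub_cancel_left, map_neg_eq_map, map_smul_eq_mul, Real.norm_of_nonneg hα₀.le,
    ← lt_sub_iff_add_lt, maxViolation_lt_iff hA]
  intro v hv
  rw [dotProduct_sub, dotProduct_smul, smul_eq_mul]
  linarith [hα v hv]

lemma inv_dualDist0_le_polarHof (hp : ∀ x, p x = 0 → x = 0) {d : Fin n → ℝ}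
    (hd : ∀ v ∈ A, v ⬝ᵥ d ≤ 1) :
    (dualDist0 p (convexHull ℝ {v ∈ A | v ⬝ᵥ d = 1}))⁻¹ ≤ polarHof p A := by
  simp only [dualDist0, ENNReal.inv_iInf]
  refine iSup₂_le fun w hw => (inv_dualNorm_le_pDist hp ?_ ?_).trans (pDist_le_polarHof hd)
  · have hneg : w ⬝ᵥ (-d) ≤ -1 :=
      dotProduct_le_of_mem_convexHull (fun v hv => by rw [dotProduct_neg, hv.2]) hw
    rw [dotProduct_neg] at hneg
    linarith
  · exact fun s hs => dotProduct_le_of_mem_convexHull (fun v hv => hs v hv.1) hw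

lemma inv_dualDist0_maxViolation_le (hA : IsCompact A) {e : Fin n → ℝ}
    (he : 0 < maxViolation A e) :
    (dualDist0 p (convexHull ℝ {v ∈ A | v ⬝ᵥ e = maxViolation A e}))⁻¹ ≤
      ⨆ (d : Fin n → ℝ) (_ : ∀ v ∈ A, v ⬝ᵥ d ≤ 1),
        (dualDist0 p (convexHull ℝ {v ∈ A | v ⬝ᵥ d = 1}))⁻¹ := by
  have hle : ∀ v ∈ A, v ⬝ᵥ ((maxViolation A e)⁻¹ • e) ≤ 1 := fun v hv => by
    rw [dotProduct_smul, smul_eq_mul, inv_mul_le_iff₀ he, mul_one]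
    exact dotProduct_le_maxViolation hA (mem_insert_of_mem 0 hv) e
  have hface : {v ∈ A | v ⬝ᵥ e = maxViolation A e} =
      {v ∈ A | v ⬝ᵥ ((maxViolation A e)⁻¹ • e) = 1} := by
    ext v
    simp only [mem_ofPred_eq, dotProduct_smul, smul_eq_mul, inv_mul_eq_one₀ he.ne', eq_comm]
  rw [hface]
  exact le_iSup₂ (f := fun (d : Fin n → ℝ) (_ : ∀ v ∈ A, v ⬝ᵥ d ≤ 1) =>
    (dualDist0 p (convexHull ℝ {v ∈ A | v ⬝ᵥ d = 1}))⁻¹) _ hle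

theorem polarHof_eq_iSup_inv_dualDist0 (hp : ∀ x, p x = 0 → x = 0) (hA : IsCompact A) :
    polarHof p A = ⨆ (d : Fin n → ℝ) (_ : ∀ v ∈ A, v ⬝ᵥ d ≤ 1),
      (dualDist0 p (convexHull ℝ {v ∈ A | v ⬝ᵥ d = 1}))⁻¹ := by
  refine le_antisymm (iSup₂_le fun d hd => le_of_not_gt fun hlt => ?_)
    (iSup₂_le fun d hd => inv_dualDist0_le_polarHof hp hd)
  obtain ⟨r, -, hMr, hrd⟩ := ENNReal.lt_iff_exists_real_btwn.1 hlt
  have hr : 0 < r := ENNReal.ofReal_pos.1 (bot_le.trans_lt hMr)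
  obtain ⟨s, hs, hsd⟩ := exists_eq_zero_of_forall_exists_add_mul_lt hp (continuous_maxViolation hA)
    (maxViolation_nonneg hA) (inv_pos.2 hr) (fun e he =>
      exists_maxViolation_add_mul_lt hp hA he <| by
        rw [ENNReal.ofReal_inv_of_pos hr]
        exact ENNReal.inv_lt_iff_inv_lt.1 ((inv_dualDist0_maxViolation_le hA he).trans_lt hMr)) d
  have hps : p (d - s) ≤ r := by
    rw [map_sub_rev]
    simpa only [mul_one] using
      (inv_mul_le_iff₀ hr).1 (hsd.trans (maxViolation_le zero_le_one hd))
  exact hrd.not_ge ((pDist_le (mem_negPolar_of_maxViolation_eq_zero hA hs)).trans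
    (ENNReal.ofReal_le_ofReal hps))

end FaceFormula

section System

variable {n : ℕ} {T : Type*} [TopologicalSpace T] {a : T → (Fin n → ℝ)}
  {p : Seminorm ℝ (Fin n → ℝ)} {b : C(T, ℝ)}

lemma mem_feas {x : Fin n → ℝ} : x ∈ feas a b ↔ ∀ t, a t ⬝ᵥ x ≤ b t := Iff.rfl

lemma mem_activeIdx {x : Fin n → ℝ} {t : T} : t ∈ activeIdx a b x ↔ a t ⬝ᵥ x = b t := Iff.rfl

lemma isClosed_feas : IsClosed (feas a b) := by
  simp only [feas, ofPred_forall]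
  exact isClosed_iInter fun t => isClosed_le (by fun_prop) continuous_const

lemma isCompact_image_activeIdx [CompactSpace T] (ha : Continuous a) (x : Fin n → ℝ) :
    IsCompact (a '' activeIdx a b x) :=
  (isClosed_eq (by fun_prop) b.continuous).isCompact.image ha

lemma sub_mem_negPolar_image_activeIdx {x : Fin n → ℝ} {s : Fin n → ℝ} (hs : s ∈ feas a b) :
    s - x ∈ negPolar (a '' activeIdx a b x) := by
  rintro _ ⟨t, ht, rfl⟩
  change a t ⬝ᵥ (s - x) ≤ 0
  rw [dotProduct_sub, mem_activeIdx.1 ht]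
  exact sub_nonpos.2 (hs t)

lemma iSup_Dfam {L : Type*} [CompleteLattice L] (φ : Set (Fin n → ℝ) → L) (x : Fin n → ℝ) :
    ⨆ D ∈ Dfam a b x, φ (a '' D) =
      ⨆ (d : Fin n → ℝ) (_ : ∀ v ∈ a '' activeIdx a b x, v ⬝ᵥ d ≤ 1),
        φ {v ∈ a '' activeIdx a b x | v ⬝ᵥ d = 1} := by
  refine le_antisymm (iSup₂_le ?_) (iSup₂_le fun d hd => ?_)
  · rintro D ⟨hD, d, hd_eq, hd_lt⟩
    have hface : a '' D = {v ∈ a '' activeIdx a b x | v ⬝ᵥ d = 1} := by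
      ext v
      constructor
      · rintro ⟨t, ht, rfl⟩
        exact ⟨mem_image_of_mem a (hD ht), hd_eq t ht⟩
      · rintro ⟨⟨t, ht, rfl⟩, htd⟩
        exact ⟨t, by_contra fun htD => (hd_lt t ⟨ht, htD⟩).ne htd, rfl⟩
    refine le_iSup₂_of_le d ?_ (congrArg φ hface).le
    rintro _ ⟨t, ht, rfl⟩
    by_cases htD : t ∈ D
    · exact (hd_eq t htD).le
    · exact (hd_lt t ⟨ht, htD⟩).le
  · have hface : a '' {t ∈ activeIdx a b x | a t ⬝ᵥ d = 1} =
        {v ∈ a '' activeIdx a b x | v ⬝ᵥ d = 1} :=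
      image_inter_preimage a (activeIdx a b x) {v | v ⬝ᵥ d = 1}
    refine le_iSup₂_of_le {t ∈ activeIdx a b x | a t ⬝ᵥ d = 1} ?_ (congrArg φ hface).ge
    exact ⟨fun t ht => ht.1, d, fun t ht => ht.2, fun t ht =>
      (hd _ (mem_image_of_mem a ht.1)).lt_of_ne fun htd => ht.2 ⟨ht.1, htd⟩⟩

theorem polarHof_eq_iSup_Dfam [CompactSpace T] (ha : Continuous a) (hp : ∀ x, p x = 0 → x = 0)
    (x : Fin n → ℝ) :
    polarHof p (a '' activeIdx a b x) =
      ⨆ D ∈ Dfam a b x, (dualDist0 p (convexHull ℝ (a '' D)))⁻¹ :=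
  (polarHof_eq_iSup_inv_dualDist0 hp (isCompact_image_activeIdx ha x)).trans
    (iSup_Dfam (fun F => (dualDist0 p (convexHull ℝ F))⁻¹) x).symm

lemma polarHof_le_of_activeIdx_subset [CompactSpace T] (ha : Continuous a) {y z : Fin n → ℝ}
    (hy : y ∈ feas a b) (hyz : activeIdx a b y ⊆ activeIdx a b z) :
    polarHof p (a '' activeIdx a b y) ≤ polarHof p (a '' activeIdx a b z) := by
  have hslack : ∀ t ∈ activeIdx a b z, a t ⬝ᵥ (z - y) = b t - a t ⬝ᵥ y := fun t ht => by
    rw [dotProduct_sub, mem_activeIdx.1 ht]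
  have hface : a '' activeIdx a b y = {v ∈ a '' activeIdx a b z | v ⬝ᵥ (z - y) = 0} := by
    ext v
    constructor
    · rintro ⟨t, ht, rfl⟩
      exact ⟨mem_image_of_mem a (hyz ht), by rw [hslack t (hyz ht), mem_activeIdx.1 ht, sub_self]⟩
    · rintro ⟨⟨t, ht, rfl⟩, htv⟩
      rw [hslack t ht] at htv
      exact ⟨t, (sub_eq_zero.1 htv).symm, rfl⟩
  rw [hface]
  refine polarHof_setOf_dotProduct_eq_zero_le (isCompact_image_activeIdx ha z) ?_
  rintro _ ⟨t, ht, rfl⟩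
  exact (sub_nonneg.2 (hy t)).trans_eq (hslack t ht).symm

lemma ofReal_mul_pDist_negPolar_le_pDist_feas (z d : Fin n → ℝ) {α : ℝ} (hα : 0 < α) :
    ENNReal.ofReal α * pDist p d (negPolar (a '' activeIdx a b z)) ≤
      pDist p (z + α • d) (feas a b) := by
  have hcone : pDist p (z + α • d - z) (negPolar (a '' activeIdx a b z)) ≤
      pDist p (z + α • d) (feas a b) :=
    pDist_sub_le_of_forall_sub_mem (fun s hs => sub_mem_negPolar_image_activeIdx hs) _
  rw [add_sub_cancel_left] at hcone
  exact (ofReal_mul_pDist_negPolar_le d hα).trans hcone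

end System

section Calmness

variable {n : ℕ} {T : Type*} [TopologicalSpace T] [CompactSpace T] {a : T → (Fin n → ℝ)}
  {p : Seminorm ℝ (Fin n → ℝ)} {b : C(T, ℝ)}

lemma eventually_add_smul_mem_feas (ha : Continuous a) {z d : Fin n → ℝ} (hz : z ∈ feas a b)
    (hd : ∀ v ∈ a '' activeIdx a b z, v ⬝ᵥ d < 1) :
    ∀ᶠ α in 𝓝[>] (0 : ℝ), z + α • d ∈ feas a (b + ContinuousMap.const T α) := by
  have hslack : ∀ᶠ α in 𝓝[>] (0 : ℝ), ∀ t ∈ univ, α * (a t ⬝ᵥ d - 1) < b t - a t ⬝ᵥ z :=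
    eventually_forall_mul_lt_of_isCompact isCompact_univ (by fun_prop) (by fun_prop)
      (fun t _ => sub_nonneg.2 (hz t))
      fun t _ ht => sub_neg.2 (hd _ (mem_image_of_mem a (sub_eq_zero.1 ht).symm))
  filter_upwards [hslack] with α hα
  refine mem_feas.2 fun t => ?_
  rw [dotProduct_add, dotProduct_smul, smul_eq_mul, ContinuousMap.add_apply,
    ContinuousMap.const_apply]
  linarith [hα t (mem_univ t)]

lemma tendsto_add_const_add_smul (b : C(T, ℝ)) (z d : Fin n → ℝ) :
    Tendsto (fun α : ℝ => (b + ContinuousMap.const T α, z + α • d)) (𝓝[>] 0) (𝓝 (b, z)) := by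
  have hcont : Continuous fun α : ℝ => (b + ContinuousMap.const T α, z + α • d) :=
    (continuous_const.add ContinuousMap.continuous_const').prodMk (by fun_prop)
  refine (hcont.tendsto' 0 _ ?_).mono_left nhdsWithin_le_nhds
  ext <;> simp

lemma edist_add_const_le (b : C(T, ℝ)) {α : ℝ} (hα : 0 ≤ α) :
    edist (b + ContinuousMap.const T α) b ≤ ENNReal.ofReal α := by
  rw [edist_dist]
  refine ENNReal.ofReal_le_ofReal ((ContinuousMap.dist_le hα).2 fun t => ?_)
  simp [abs_of_nonneg hα]

theorem polarHof_le_clmF (ha : Continuous a) {z : Fin n → ℝ} (hz : z ∈ feas a b) :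
    polarHof p (a '' activeIdx a b z) ≤ clmF a p b z := by
  refine polarHof_le_of_forall_lt fun d hd => ?_
  have hlim : Tendsto (fun α : ℝ => (b + ContinuousMap.const T α, z + α • d)) (𝓝[>] 0)
      (𝓝 (b, z) ⊓ 𝓟 {q : C(T, ℝ) × (Fin n → ℝ) | q.2 ∈ feas a q.1}) :=
    tendsto_inf.2 ⟨tendsto_add_const_add_smul b z d,
      tendsto_principal.2 (eventually_add_smul_mem_feas ha hz hd)⟩
  refine le_limsup_of_frequently_le (hlim.frequently (Eventually.frequently ?_))
  filter_upwards [self_mem_nhdsWithin] with α hα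
  have hα : 0 < α := hα
  calc pDist p d (negPolar (a '' activeIdx a b z))
      = ENNReal.ofReal α * pDist p d (negPolar (a '' activeIdx a b z)) / ENNReal.ofReal α := by
        rw [mul_comm (ENNReal.ofReal α),
          ENNReal.mul_div_cancel_right (ENNReal.ofReal_pos.2 hα).ne' ENNReal.ofReal_ne_top]
    _ ≤ pDist p (z + α • d) (feas a b) / edist (b + ContinuousMap.const T α) b :=
        ENNReal.div_le_div (ofReal_mul_pDist_negPolar_le_pDist_feas z d hα)
          (edist_add_const_le b hα.le)

theorem clmF_le_hofF (z : Fin n → ℝ) : clmF a p b z ≤ hofF a p b := by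
  refine limsup_le_of_le (by isBoundedDefault) ?_
  filter_upwards [mem_inf_of_right (mem_principal_self _)] with q hq
  refine le_iSup_of_le q.2 (ENNReal.div_le_div le_rfl ?_)
  rw [edist_comm]
  exact Metric.infEDist_le_edist_of_mem hq

end Calmness

section HoffmanBound

lemma div_infEDist_le {X : Type*} [PseudoMetricSpace X] {x : X} {S : Set X} (hS : S.Nonempty)
    {u M : ℝ≥0∞} (h : ∀ y ∈ S, u ≤ edist x y * M) : u / Metric.infEDist x S ≤ M := by
  rcases eq_or_ne M ⊤ with rfl | hM
  · exact le_top
  have hdiv : u / M ≤ Metric.infEDist x S :=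
    Metric.le_infEDist.2 fun y hy => ENNReal.div_le_of_le_mul (h y hy)
  rw [ENNReal.div_le_iff_le_mul (Or.inr (Metric.infEDist_ne_top hS)) (Or.inl hM), mul_comm] at hdiv
  exact ENNReal.div_le_of_le_mul hdiv

variable {n : ℕ} {T : Type*} [TopologicalSpace T] {a : T → (Fin n → ℝ)}
  {p : Seminorm ℝ (Fin n → ℝ)} {b : C(T, ℝ)}

lemma seminorm_sub_le_of_mem_feasDirs {x y e : Fin n → ℝ}
    (hmin : IsMinOn (fun y => p (y - x)) (feas a b) y) (he : e ∈ feasDirs a b y) :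
    p (x - y) ≤ p (x - y - e) := by
  obtain ⟨ε, hε, hfeas⟩ := he
  obtain ⟨α, hα₀, hαε, hα₁⟩ : ∃ α : ℝ, 0 < α ∧ α ≤ ε ∧ α ≤ 1 :=
    ⟨min ε 1, lt_min hε one_pos, min_le_left _ _, min_le_right _ _⟩
  have hstep : p (x - y) ≤ (1 - α) * p (x - y) + α * p (x - y - e) :=
    calc p (x - y) = p (y - x) := map_sub_rev p x y
      _ ≤ p (y + α • e - x) := hmin (hfeas α ⟨hα₀.le, hαε⟩)
      _ = p ((1 - α) • (x - y) + α • (x - y - e)) := by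
          rw [map_sub_rev]
          congr 1
          module
      _ ≤ p ((1 - α) • (x - y)) + p (α • (x - y - e)) := map_add_le_add p _ _
      _ = (1 - α) * p (x - y) + α * p (x - y - e) := by
          rw [map_smul_eq_mul, map_smul_eq_mul, Real.norm_of_nonneg hα₀.le,
            Real.norm_of_nonneg (sub_nonneg.2 hα₁)]
  exact le_of_mul_le_mul_left (by linarith : α * p (x - y) ≤ α * p (x - y - e)) hα₀

lemma pDist_feas_le_edist_mul_polarHof [CompactSpace T] {x y : Fin n → ℝ} (hy : y ∈ feas a b)
    (hmin : IsMinOn (fun y => p (y - x)) (feas a b) y)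
    (hdir : negPolar (a '' activeIdx a b y) ⊆ feasDirs a b y) {b' : C(T, ℝ)} (hx : x ∈ feas a b') :
    pDist p x (feas a b) ≤ edist b b' * polarHof p (a '' activeIdx a b y) := by
  have hviol : ∀ v ∈ a '' activeIdx a b y, v ⬝ᵥ (x - y) ≤ dist b b' := by
    rintro _ ⟨t, ht, rfl⟩
    calc a t ⬝ᵥ (x - y) = a t ⬝ᵥ x - b t := by rw [dotProduct_sub, mem_activeIdx.1 ht]
      _ ≤ b' t - b t := sub_le_sub_right (hx t) _
      _ ≤ |b' t - b t| := le_abs_self _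
      _ = dist (b t) (b' t) := by rw [dist_comm, Real.dist_eq]
      _ ≤ dist b b' := ContinuousMap.dist_apply_le_dist t
  calc pDist p x (feas a b) ≤ ENNReal.ofReal (p (x - y)) := pDist_le hy
    _ ≤ pDist p (x - y) (negPolar (a '' activeIdx a b y)) := le_pDist_iff.2 fun e he =>
        ENNReal.ofReal_le_ofReal (seminorm_sub_le_of_mem_feasDirs hmin (hdir he))
    _ ≤ ENNReal.ofReal (dist b b') * polarHof p (a '' activeIdx a b y) :=
        pDist_le_ofReal_mul_polarHof dist_nonneg hviol
    _ = edist b b' * polarHof p (a '' activeIdx a b y) := by rw [edist_dist]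

theorem hofF_le_iSup_polarHof [CompactSpace T] (ha : Continuous a) (hp : ∀ x, p x = 0 → x = 0)
    (hdom : (feas a b).Nonempty)
    (hdir : ∀ y ∈ feas a b, negPolar (a '' activeIdx a b y) ⊆ feasDirs a b y) :
    hofF a p b ≤ ⨆ y ∈ feas a b, polarHof p (a '' activeIdx a b y) := by
  refine iSup_le fun x => ?_
  obtain ⟨y, hy, hmin⟩ := exists_isMinOn_seminorm_sub hp isClosed_feas hdom x
  have hne : {b' : C(T, ℝ) | x ∈ feas a b'}.Nonempty :=
    ⟨⟨fun t => a t ⬝ᵥ x, by fun_prop⟩, fun _ => le_rfl⟩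
  exact le_iSup₂_of_le y hy <| div_infEDist_le hne fun b' hb' =>
    pDist_feas_le_edist_mul_polarHof hy hmin (hdir y hy) hb'

end HoffmanBound

section ExtremePoints

variable {n : ℕ}

lemma dotProduct_eq_zero_of_mem_span {A : Set (Fin n → ℝ)} {e w : Fin n → ℝ}
    (h : ∀ v ∈ A, v ⬝ᵥ e = 0) (hw : w ∈ Submodule.span ℝ A) : w ⬝ᵥ e = 0 := by
  induction hw using Submodule.span_induction with
  | mem v hv => exact h v hv
  | zero => exact zero_dotProduct e
  | add u v _ _ hu hv => rw [add_dotProduct, hu, hv, add_zero]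
  | smul c v _ hv => rw [smul_dotProduct, hv, smul_zero]

lemma exists_mem_forall_dotProduct_eq (V : Submodule ℝ (Fin n → ℝ)) (y : Fin n → ℝ) :
    ∃ x ∈ V, ∀ v ∈ V, v ⬝ᵥ x = v ⬝ᵥ y := by
  set B : LinearMap.BilinForm ℝ (Fin n → ℝ) := dotProductBilin ℝ ℝ
  have hrefl : B.IsRefl := fun u v huv => (dotProduct_comm v u).trans huv
  have hdisj : Disjoint V (B.orthogonal V) := Submodule.disjoint_def.2 fun v hv hv' =>
    dotProduct_self_eq_zero.1 (hv' v hv)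
  obtain ⟨x, hx, w, hw, rfl⟩ := Submodule.mem_sup.1 <| Submodule.eq_top_iff'.1
    ((LinearMap.BilinForm.isCompl_orthogonal_iff_disjoint hrefl).2 hdisj).sup_eq_top y
  refine ⟨x, hx, fun v hv => ?_⟩
  have hvw : v ⬝ᵥ w = 0 := hw v hv
  rw [dotProduct_add, hvw, add_zero]

lemma dotProduct_eq_of_mem_openSegment {v x₁ x₂ y : Fin n → ℝ} {c : ℝ}
    (hy : y ∈ openSegment ℝ x₁ x₂) (h₁ : v ⬝ᵥ x₁ ≤ c) (h₂ : v ⬝ᵥ x₂ ≤ c) (hvy : v ⬝ᵥ y = c) :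
    v ⬝ᵥ x₁ = c := by
  obtain ⟨α, β, hα, hβ, hαβ, rfl⟩ := hy
  rw [dotProduct_add, dotProduct_smul, dotProduct_smul, smul_eq_mul, smul_eq_mul] at hvy
  refine h₁.antisymm (le_of_mul_le_mul_left (?_ : α * c ≤ α * (v ⬝ᵥ x₁)) hα)
  have hc : α * c + β * c = c := by rw [← add_mul, hαβ, one_mul]
  linarith [mul_le_mul_of_nonneg_left h₂ hβ.le]

variable {T : Type*} [TopologicalSpace T] {a : T → (Fin n → ℝ)} {b : C(T, ℝ)}

lemma exists_dotProduct_eq_zero_of_notMem_Eset {y : Fin n → ℝ} (hy : y ∈ feas a b)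
    (hyV : y ∈ Submodule.span ℝ (range a)) (hyE : y ∉ Eset a b) :
    ∃ e ∈ Submodule.span ℝ (range a), e ≠ 0 ∧ ∀ t ∈ activeIdx a b y, a t ⬝ᵥ e = 0 := by
  rw [Eset, mem_extremePoints_iff_left] at hyE
  push Not at hyE
  obtain ⟨x₁, hx₁, x₂, hx₂, hseg, hne⟩ := hyE ⟨hy, hyV⟩
  refine ⟨x₁ - y, Submodule.sub_mem _ hx₁.2 hyV, sub_ne_zero.2 hne, fun t ht => ?_⟩
  have ht' : a t ⬝ᵥ y = b t := ht
  rw [dotProduct_sub, dotProduct_eq_of_mem_openSegment hseg (hx₁.1 t) (hx₂.1 t) ht', ht', sub_self]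

lemma exists_dotProduct_pos_of_notMem_Eset {y : Fin n → ℝ} (hy : y ∈ feas a b)
    (hyV : y ∈ Submodule.span ℝ (range a)) (hyE : y ∉ Eset a b) :
    ∃ e ∈ Submodule.span ℝ (range a),
      (∀ t ∈ activeIdx a b y, a t ⬝ᵥ e = 0) ∧ ∃ t, 0 < a t ⬝ᵥ e := by
  obtain ⟨e, heV, he₀, hact⟩ := exists_dotProduct_eq_zero_of_notMem_Eset hy hyV hyE
  obtain ⟨t, ht⟩ : ∃ t, a t ⬝ᵥ e ≠ 0 := by
    by_contra! h
    exact he₀ (dotProduct_self_eq_zero.1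
      (dotProduct_eq_zero_of_mem_span (forall_mem_range.2 h) heV))
  rcases ht.lt_or_gt with hneg | hpos
  · refine ⟨-e, Submodule.neg_mem _ heV, fun s hs => ?_, t, ?_⟩
    · rw [dotProduct_neg, hact s hs, neg_zero]
    · rw [dotProduct_neg]
      exact neg_pos.2 hneg
  · exact ⟨e, heV, hact, t, hpos⟩

lemma exists_add_smul_mem_feas_notMem_feasDirs {y e : Fin n → ℝ} (hy : y ∈ feas a b) {t : T}
    (ht : 0 < a t ⬝ᵥ e) :
    ∃ α : ℝ, y + α • e ∈ feas a b ∧ e ∉ feasDirs a b (y + α • e) := by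
  set I : Set ℝ := {α | y + α • e ∈ feas a b}
  have hclosed : IsClosed I := isClosed_feas.preimage (by fun_prop)
  have hbdd : BddAbove I := by
    refine ⟨(b t - a t ⬝ᵥ y) / (a t ⬝ᵥ e), fun α hα => ?_⟩
    have hαt := mem_feas.1 hα t
    rw [dotProduct_add, dotProduct_smul, smul_eq_mul] at hαt
    rw [le_div_iff₀ ht]
    linarith
  obtain ⟨hmem, hmax⟩ := hclosed.isGreatest_csSup
    ⟨0, by simpa only [I, mem_ofPred_eq, zero_smul, add_zero] using hy⟩ hbdd
  refine ⟨sSup I, hmem, fun ⟨ε, hε, hfeas⟩ => ?_⟩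
  have hstep := hfeas ε ⟨hε.le, le_rfl⟩
  rw [add_assoc, ← add_smul] at hstep
  exact (lt_add_of_pos_right _ hε).not_ge (hmax hstep)

lemma exists_span_lt_of_notMem_Eset
    (hdir : ∀ x ∈ feas a b, negPolar (a '' activeIdx a b x) ⊆ feasDirs a b x)
    {y : Fin n → ℝ} (hy : y ∈ feas a b) (hyV : y ∈ Submodule.span ℝ (range a))
    (hyE : y ∉ Eset a b) :
    ∃ z ∈ feas a b, z ∈ Submodule.span ℝ (range a) ∧ activeIdx a b y ⊆ activeIdx a b z ∧
      Submodule.span ℝ (a '' activeIdx a b y) < Submodule.span ℝ (a '' activeIdx a b z) := by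
  obtain ⟨e, heV, hact, t₀, ht₀⟩ := exists_dotProduct_pos_of_notMem_Eset hy hyV hyE
  obtain ⟨α, hz, hze⟩ := exists_add_smul_mem_feas_notMem_feasDirs hy ht₀
  have hsub : activeIdx a b y ⊆ activeIdx a b (y + α • e) := fun t ht => by
    rw [mem_activeIdx, dotProduct_add, dotProduct_smul, hact t ht, smul_zero, add_zero]
    exact ht
  obtain ⟨t₁, ht₁, ht₁e⟩ : ∃ t ∈ activeIdx a b (y + α • e), 0 < a t ⬝ᵥ e := by
    by_contra! h
    exact hze (hdir _ hz (forall_mem_image.2 h))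
  refine ⟨y + α • e, hz, Submodule.add_mem _ hyV (Submodule.smul_mem _ _ heV), hsub,
    SetLike.lt_iff_le_and_exists.2 ⟨Submodule.span_mono (image_mono hsub), a t₁,
      Submodule.subset_span (mem_image_of_mem a ht₁), fun hspan => ht₁e.ne' ?_⟩⟩
  exact dotProduct_eq_zero_of_mem_span (forall_mem_image.2 hact) hspan

theorem exists_mem_Eset_activeIdx_subset
    (hdir : ∀ x ∈ feas a b, negPolar (a '' activeIdx a b x) ⊆ feasDirs a b x)
    {y : Fin n → ℝ} (hy : y ∈ feas a b) : ∃ z ∈ Eset a b, activeIdx a b y ⊆ activeIdx a b z := by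
  obtain ⟨x, hxV, hx⟩ := exists_mem_forall_dotProduct_eq (Submodule.span ℝ (range a)) y
  have hxy : ∀ t, a t ⬝ᵥ x = a t ⬝ᵥ y := fun t => hx _ (Submodule.subset_span (mem_range_self t))
  obtain ⟨z, ⟨hz, hzV, hyz⟩, hmax⟩ := exists_maximalFor_of_wellFoundedGT
    (fun z => z ∈ feas a b ∧ z ∈ Submodule.span ℝ (range a) ∧ activeIdx a b y ⊆ activeIdx a b z)
    (fun z => Submodule.span ℝ (a '' activeIdx a b z))
    ⟨x, fun t => (hxy t).trans_le (hy t), hxV, fun t ht => (hxy t).trans ht⟩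
  refine ⟨z, by_contra fun hzE => ?_, hyz⟩
  obtain ⟨z', hz', hz'V, hzz', hlt⟩ := exists_span_lt_of_notMem_Eset hdir hz hzV hzE
  exact hlt.not_ge (hmax ⟨hz', hz'V, hyz.trans hzz'⟩ hlt.le)

end ExtremePoints

theorem hofF_eq_sup_clm_extreme_of_LOP_general
    {n : ℕ} {T : Type*} [TopologicalSpace T] [CompactSpace T]
    (a : T → (Fin n → ℝ)) (ha : Continuous a)
    (p : Seminorm ℝ (Fin n → ℝ)) (hp : ∀ x, p x = 0 → x = 0)
    (bbar : C(T, ℝ)) (hdom : (feas a bbar).Nonempty)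
    (hLOP : ∀ x ∈ feas a bbar,
        feasDirs a bbar x = negPolar (coneHull (a '' activeIdx a bbar x))) :
    hofF a p bbar = (⨆ x ∈ Eset a bbar, clmF a p bbar x) ∧
    hofF a p bbar =
      (⨆ x ∈ Eset a bbar, ⨆ D ∈ Dfam a bbar x,
        (dualDist0 p (convexHull ℝ (a '' D)))⁻¹) := by
  have hdir : ∀ x ∈ feas a bbar, negPolar (a '' activeIdx a bbar x) ⊆ feasDirs a bbar x :=
    fun x hx => by rw [hLOP x hx, negPolar_coneHull]
  have hofF_le : hofF a p bbar ≤ ⨆ x ∈ Eset a bbar, polarHof p (a '' activeIdx a bbar x) :=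
    (hofF_le_iSup_polarHof ha hp hdom hdir).trans <| iSup₂_le fun y hy => by
      obtain ⟨z, hz, hyz⟩ := exists_mem_Eset_activeIdx_subset hdir hy
      exact le_iSup₂_of_le z hz (polarHof_le_of_activeIdx_subset ha hy hyz)
  have polarHof_le : ⨆ x ∈ Eset a bbar, polarHof p (a '' activeIdx a bbar x) ≤
      ⨆ x ∈ Eset a bbar, clmF a p bbar x :=
    iSup₂_mono fun x hx => polarHof_le_clmF ha hx.1.1
  have clmF_le : ⨆ x ∈ Eset a bbar, clmF a p bbar x ≤ hofF a p bbar :=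
    iSup₂_le fun x _ => clmF_le_hofF x
  simp only [← polarHof_eq_iSup_Dfam ha hp]
  exact ⟨(hofF_le.trans polarHof_le).antisymm clmF_le,
    hofF_le.antisymm (polarHof_le.trans clmF_le)⟩

/-- Theorem `thm 1`. Let `b̄ ∈ dom F` and assume `σ(b̄)` is locally
polyhedral, i.e. `D(F(b̄),x) = A(x)°` for every `x ∈ F(b̄)`. Then
`Hof F(b̄) = sup_{x ∈ E(b̄)} clm F(b̄,x)
          = sup_{x ∈ E(b̄)} sup_{D ∈ 𝒟(x)} d_*(0ₙ, conv{a_t : t ∈ D})⁻¹`. -/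
theorem hofF_eq_sup_clm_extreme_of_LOP
    {n : ℕ} {T : Type*} [MetricSpace T] [CompactSpace T]
    (a : T → (Fin n → ℝ)) (ha : Continuous a)
    (p : Seminorm ℝ (Fin n → ℝ)) (hp : ∀ x, p x = 0 → x = 0)
    (bbar : C(T, ℝ)) (hdom : (feas a bbar).Nonempty)
    (hLOP : ∀ x ∈ feas a bbar,
        feasDirs a bbar x = negPolar (coneHull (a '' activeIdx a bbar x))) :
    hofF a p bbar = (⨆ x ∈ Eset a bbar, clmF a p bbar x) ∧
    hofF a p bbar =
      (⨆ x ∈ Eset a bbar, ⨆ D ∈ Dfam a bbar x,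
        (dualDist0 p (convexHull ℝ (a '' D)))⁻¹) :=
  hofF_eq_sup_clm_extreme_of_LOP_general a ha p hp bbar hdom hLOP
end
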